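/- arXiv:0904.2288 — 5 statements merged into one kernel-verified Lean document; each statement's English description precedes it below -/
import Mathlib

section
/- Let E₁ and E₂ be metrizable topological spaces with their Borel σ-algebras, let Ψ : E₁ × E₂ → ℝ be bounded and jointly Borel measurable, and let Φ₁, Φ₂ : E₁ × E₂ → ℝ be jointly Borel measurable. Let X¹ = (X¹_t)_{t≥0} and X² = (X²_t)_{t≥0} be independent càdlàg processes with values in E₁ and E₂ respectively, such that for each x₂ ∈ E₂ the process t ↦ Ψ(X¹_t, x₂) − ∫₀ᵗ Φ₁(X¹_s, x₂) ds is a martingale with respect to the filtration generated by X¹, with E[|Ψ(X¹_t, x₂)|] < ∞ and ∫₀ᵗ E[|Φ₁(X¹_s, x₂)|] ds < ∞ for all t ≥ 0, and symmetrically for each x₁ ∈ E₁ the process t ↦ Ψ(x₁, X²_t) − ∫₀ᵗ Φ₂(x₁, X²_s) ds is a martingale with respect to the filtration generated by X², with the analogous integrability. Assume moreover that ∫₀ᵀ∫₀ᵀ E[|Φᵢ(X¹_s, X²_t)|] ds dt < ∞ for all T ≥ 0 and i = 1, 2. Define R(x₁,x₂) := Φ₁(x₁,x₂) − Φ₂(x₁,x₂).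 Then for Lebesgue-almost every T ≥ 0, E[Ψ(X¹_T, X²_0)] − E[Ψ(X¹_0, X²_T)] = ∫₀ᵀ E[R(X¹_t, X²_{T−t})] dt. -/
open MeasureTheory ProbabilityTheory Filter Set
open scoped NNReal ENNReal

def dTri (S : ℝ) : Set (ℝ × ℝ) := {p | 0 < p.1 ∧ 0 < p.2 ∧ p.1 + p.2 ≤ S}

lemma dTri_meas (S : ℝ) : MeasurableSet (dTri S) := by
  unfold dTri
  measurability

lemma dTri_sec {g : ℝ × ℝ → ℝ} {S : ℝ} (hS : 0 ≤ S) (hg : IntegrableOn g (dTri S) (volume.prod volume)) :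
    ∫ p in dTri S, g p ∂(volume.prod volume) = ∫ t in (0:ℝ)..S, ∫ u in (0:ℝ)..(S - t), g (u, t) := by
  rw [← integral_indicator (dTri_meas S), integral_prod_symm _ (hg.integrable_indicator (dTri_meas S)),
    intervalIntegral.integral_of_le hS, ← integral_indicator measurableSet_Ioc]
  congr 1
  ext t
  by_cases ht : t ∈ Ioc 0 S
  · rw [indicator_of_mem ht, intervalIntegral.integral_of_le (by linarith [ht.2]),
      ← integral_indicator measurableSet_Ioc]
    congr 1
    ext u
    have : (u, t) ∈ dTri S ↔ u ∈ Ioc 0 (S - t) := by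
      simp only [dTri, mem_ofPred_eq, mem_Ioc] at ht ⊢
      constructor
      · rintro ⟨h1, h2, h3⟩; exact ⟨h1, by linarith⟩
      · rintro ⟨h1, h2⟩; exact ⟨h1, ht.1, by linarith⟩
    by_cases hu : u ∈ Ioc 0 (S - t)
    · rw [indicator_of_mem hu, indicator_of_mem (this.2 hu)]
    · rw [indicator_of_notMem hu, indicator_of_notMem (fun h => hu (this.1 h))]
  · rw [indicator_of_notMem ht]
    have : ∀ u, (dTri S).indicator g (u, t) = 0 := by
      intro u
      apply indicator_of_notMem
      rintro ⟨h1, h2, h3⟩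
      exact ht ⟨h2, by simp only at *; linarith⟩
    simp [this]

lemma dTri_diag {g : ℝ × ℝ → ℝ} {S : ℝ} (hS : 0 ≤ S)
    (hg : IntegrableOn g (dTri S) (volume.prod volume)) :
    IntervalIntegrable (fun T => ∫ t in (0:ℝ)..T, g (t, T - t)) volume 0 S ∧
    ∫ p in dTri S, g p ∂(volume.prod volume) = ∫ T in (0:ℝ)..S, ∫ t in (0:ℝ)..T, g (t, T - t) := by
  have hi := hg.integrable_indicator (dTri_meas S)
  have mp := measurePreserving_prod_sub (volume : Measure ℝ) (volume : Measure ℝ)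
  have hi2 := mp.integrable_comp_of_integrable hi
  have key : (fun T => ∫ t, (dTri S).indicator g (t, T - t)) =
      (Ioc 0 S).indicator (fun T => ∫ t in (0:ℝ)..T, g (t, T - t)) := by
    ext T
    by_cases hT : T ∈ Ioc 0 S
    · rw [indicator_of_mem hT, intervalIntegral.integral_of_le hT.1.le,
        integral_Ioc_eq_integral_Ioo, ← integral_indicator measurableSet_Ioo]
      congr 1
      ext u
      have : (u, T - u) ∈ dTri S ↔ u ∈ Ioo 0 T := by
        simp only [dTri, mem_ofPred_eq, mem_Ioc, mem_Ioo] at hT ⊢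
        constructor
        · rintro ⟨h1, h2, h3⟩; exact ⟨h1, by linarith⟩
        · rintro ⟨h1, h2⟩; exact ⟨h1, by linarith, by linarith⟩
      by_cases hu : u ∈ Ioo 0 T
      · rw [indicator_of_mem hu, indicator_of_mem (this.2 hu)]
      · rw [indicator_of_notMem hu, indicator_of_notMem (fun h => hu (this.1 h))]
    · rw [indicator_of_notMem hT]
      have : ∀ u, (dTri S).indicator g (u, T - u) = 0 := by
        intro u
        apply indicator_of_notMem
        rintro ⟨h1, h2, h3⟩
        simp only at h1 h2 h3
        exact hT ⟨by linarith, by linarith⟩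
      simp [this]
  constructor
  · rw [intervalIntegrable_iff_integrableOn_Ioc_of_le hS, ← integrable_indicator_iff measurableSet_Ioc,
      ← key]
    exact hi2.integral_prod_right
  · rw [intervalIntegral.integral_of_le hS, ← integral_indicator measurableSet_Ioc, ← key,
      ← integral_indicator (dTri_meas S), ← mp.map_eq,
      integral_map mp.measurable.aemeasurable (by rw [mp.map_eq]; exact hi.aestronglyMeasurable)]
    exact integral_prod_symm _ hi2

lemma core (F f₁ f₂ g : ℝ × ℝ → ℝ) (C : ℝ)
    (hF : Measurable F) (hFb : ∀ p, |F p| ≤ C)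
    (hf₁ : ∀ S : ℝ, IntegrableOn f₁ (Ioc 0 S ×ˢ Ioc 0 S) (volume.prod volume))
    (hf₂ : ∀ S : ℝ, IntegrableOn f₂ (Ioc 0 S ×ˢ Ioc 0 S) (volume.prod volume))
    (hg : ∀ S : ℝ, ∀ᵐ p ∂((volume.prod volume).restrict (Ioc 0 S ×ˢ Ioc 0 S)), g p = f₁ p - f₂ p)
    (h1 : ∀ S : ℝ, ∀ᵐ t ∂(volume.restrict (Ioc 0 S)), 
      F (S - t, t) - F (0, t) = ∫ u in (0:ℝ)..(S - t), f₁ (u, t))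
    (h2 : ∀ S : ℝ, ∀ᵐ s ∂(volume.restrict (Ioc 0 S)), 
      F (s, S - s) - F (s, 0) = ∫ u in (0:ℝ)..(S - s), f₂ (s, u)) :
    ∀ᵐ T ∂(volume.restrict (Ici (0:ℝ))), F (T, 0) - F (0, T) = ∫ t in (0:ℝ)..T, g (t, T - t) := by
  have hsub : ∀ S, dTri S ⊆ Ioc 0 S ×ˢ Ioc 0 S := by
    rintro S ⟨a, b⟩ ⟨h1, h2, h3⟩
    simp only at h1 h2 h3
    exact ⟨⟨h1, by simp only; linarith⟩, ⟨h2, by simp only; linarith⟩⟩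
  have hgi : ∀ S, IntegrableOn g (dTri S) (volume.prod volume) := fun S =>
    (IntegrableOn.mono_set (((hf₁ S).sub (hf₂ S)).congr ((hg S).mono fun p hp => hp.symm)) (hsub S))
  have bi : ∀ (φ : ℝ → ℝ × ℝ), Measurable φ → ∀ a b, IntervalIntegrable (fun t => F (φ t)) volume a b := by
    intro φ hφ a b
    rw [intervalIntegrable_iff]
    have : IsFiniteMeasure ((volume : Measure ℝ).restrict (uIoc a b)) :=
      ⟨by rw [uIoc]; simp⟩
    refine Integrable.of_bound (hF.comp hφ).aestronglyMeasurable C (ae_of_all _ fun t => ?_)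
    exact hFb _
  have hh : ∀ a b, IntervalIntegrable (fun T => F (T, 0) - F (0, T)) volume a b := fun a b =>
    (bi (fun T => (T, 0)) (by fun_prop) a b).sub (bi (fun T => (0, T)) (by fun_prop) a b)
  have prim : ∀ S : ℝ, 0 ≤ S → ∫ T in (0:ℝ)..S, (F (T, 0) - F (0, T))
      = ∫ T in (0:ℝ)..S, ∫ t in (0:ℝ)..T, g (t, T - t) := by
    intro S hS
    rw [← (dTri_diag hS (hgi S)).2]
    have e1 : ∫ p in dTri S, g p ∂(volume.prod volume) =
        ∫ p in dTri S, f₁ p ∂(volume.prod volume) - ∫ p in dTri S, f₂ p ∂(volume.prod volume) := by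
      rw [← integral_sub ((hf₁ S).mono_set (hsub S)) ((hf₂ S).mono_set (hsub S))]
      exact integral_congr_ae (ae_restrict_of_ae_restrict_of_subset (hsub S) (hg S))
    have e2 : ∫ p in dTri S, f₁ p ∂(volume.prod volume) =
        ∫ t in (0:ℝ)..S, (F (S - t, t) - F (0, t)) := by
      rw [dTri_sec hS ((hf₁ S).mono_set (hsub S)), intervalIntegral.integral_of_le hS,
        intervalIntegral.integral_of_le hS]
      exact integral_congr_ae ((h1 S).mono fun t ht => ht.symm)
    have e3 : ∫ p in dTri S, f₂ p ∂(volume.prod volume) =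
        ∫ t in (0:ℝ)..S, (F (t, S - t) - F (t, 0)) := by
      have mp := (Measure.measurePreserving_swap (μ := (volume : Measure ℝ)) (ν := (volume : Measure ℝ)))
      have hpre : Prod.swap ⁻¹' (dTri S) = dTri S := by
        ext ⟨a, b⟩
        simp only [dTri, mem_preimage, mem_ofPred_eq, Prod.swap]
        rw [add_comm b a]; tauto
      have h3 : IntegrableOn (f₂ ∘ Prod.swap) (dTri S) (volume.prod volume) := by
        have := (mp.integrableOn_comp_preimage (MeasurableEquiv.prodComm).measurableEmbedding
          (f := f₂) (s := dTri S)).2 ((hf₂ S).mono_set (hsub S))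
        rwa [hpre] at this
      have h4 := mp.setIntegral_preimage_emb (MeasurableEquiv.prodComm).measurableEmbedding
        f₂ (dTri S)
      rw [hpre] at h4
      rw [← h4]
      refine (dTri_sec hS h3).trans ?_
      rw [intervalIntegral.integral_of_le hS, intervalIntegral.integral_of_le hS]
      exact integral_congr_ae ((h2 S).mono fun t ht => ht.symm)
    rw [e1, e2, e3, intervalIntegral.integral_sub (bi (fun t => (S - t, t)) (by fun_prop) _ _)
      (bi (fun t => (0, t)) (by fun_prop) _ _),
      intervalIntegral.integral_sub (bi (fun t => (t, S - t)) (by fun_prop) _ _)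
      (bi (fun t => (t, 0)) (by fun_prop) _ _),
      intervalIntegral.integral_sub (bi (fun t => (t, 0)) (by fun_prop) _ _)
      (bi (fun t => (0, t)) (by fun_prop) _ _)]
    have := intervalIntegral.integral_comp_sub_left (fun t => F (t, S - t)) (a := 0) (b := S) S
    simp only [sub_sub_cancel, sub_self, sub_zero] at this
    rw [this]
    ring
  rw [ae_restrict_iff' measurableSet_Ici]
  have A : ∀ n : ℕ, ∀ᵐ T : ℝ, T ∈ Ioo 0 (n:ℝ) →
      F (T, 0) - F (0, T) = ∫ t in (0:ℝ)..T, g (t, T - t) := by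
    intro n
    have hn : (0:ℝ) ≤ n := n.cast_nonneg
    filter_upwards [(hh 0 n).ae_hasDerivAt_integral,
      (dTri_diag hn (hgi n)).1.ae_hasDerivAt_integral] with T a1 a2 hT
    have hT' : T ∈ uIcc 0 (n:ℝ) := by rw [uIcc_of_le hn]; exact ⟨hT.1.le, hT.2.le⟩
    have b1 := a1 hT' 0 left_mem_uIcc
    have b2 := a2 hT' 0 left_mem_uIcc
    refine b1.unique (b2.congr_of_eventuallyEq ?_)
    filter_upwards [Ioi_mem_nhds hT.1] with S hS
    exact prim S (le_of_lt hS)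
  have h0 : ∀ᵐ T : ℝ, T ≠ 0 := by simp [ae_iff, measure_singleton]
  filter_upwards [ae_all_iff.2 A, h0] with T hT hT0 hT1
  obtain ⟨n, hn⟩ := exists_nat_gt T
  exact hT n ⟨lt_of_le_of_ne hT1 (Ne.symm hT0), hn⟩

lemma joint_meas {Ω E : Type*} [MeasurableSpace Ω] [TopologicalSpace E]
    [TopologicalSpace.MetrizableSpace E] [MeasurableSpace E] [BorelSpace E]
    (X : ℝ → Ω → E) (hm : ∀ t, Measurable (X t))
    (hrc : ∀ ω, ∀ t : ℝ, 0 ≤ t → ContinuousWithinAt (fun s => X s ω) (Ici t) t) :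
    Measurable (fun p : ℝ × Ω => X (max p.1 0) p.2) := by
  refine measurable_of_tendsto_metrizable
    (f := fun (n : ℕ) (p : ℝ × Ω) => X (((⌊max p.1 0 * (n + 1)⌋ : ℝ) + 1) / (n + 1)) p.2) ?_ ?_
  · intro n
    have h : Measurable (fun q : ℤ × Ω => X (((q.1 : ℝ) + 1) / (n + 1)) q.2) :=
      measurable_from_prod_countable_right fun k => hm (((k : ℝ) + 1) / (n + 1))
    exact h.comp (f := fun p : ℝ × Ω => (⌊max p.1 0 * (n + 1)⌋, p.2)) (by fun_prop)
  · rw [tendsto_pi_nhds]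
    rintro ⟨t, ω⟩
    refine (hrc ω (max t 0) (le_max_right _ _)).tendsto.comp ?_
    have hlow : ∀ n : ℕ, max t 0 ≤ ((⌊max t 0 * (n + 1)⌋ : ℝ) + 1) / (n + 1) := by
      intro n
      have hn : (0:ℝ) < n + 1 := by positivity
      rw [le_div_iff₀ hn]
      exact (Int.lt_floor_add_one _).le
    refine tendsto_nhdsWithin_iff.2 ⟨?_, Eventually.of_forall hlow⟩
    have hup : ∀ n : ℕ, ((⌊max t 0 * (n + 1)⌋ : ℝ) + 1) / (n + 1) ≤ max t 0 + 1 / ((n:ℝ) + 1) := by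
      intro n
      have hn : (0:ℝ) < n + 1 := by positivity
      rw [div_le_iff₀ hn, add_mul, one_div_mul_cancel hn.ne']
      linarith [Int.floor_le (max t 0 * ((n:ℝ) + 1))]
    refine tendsto_of_tendsto_of_tendsto_of_le_of_le tendsto_const_nhds ?_ hlow hup
    simpa using tendsto_const_nhds.add (tendsto_one_div_add_atTop_nhds_zero_nat (𝕜 := ℝ))

/-- Expectation identity from the martingale property. -/
lemma mart_exp {Ω E : Type*} [MeasurableSpace Ω] (P : Measure Ω) [IsProbabilityMeasure P]
    [TopologicalSpace E]
    [TopologicalSpace.MetrizableSpace E] [MeasurableSpace E] [BorelSpace E]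
    (X : ℝ → Ω → E) (hsm : ∀ t, StronglyMeasurable (X t))
    (hrc : ∀ ω, ∀ t : ℝ, 0 ≤ t → ContinuousWithinAt (fun s => X s ω) (Ici t) t)
    (ψ φ : E → ℝ) (hφ : Measurable φ)
    (hψi : ∀ t : ℝ, 0 ≤ t → Integrable (fun ω => ψ (X t ω)) P)
    (hφi : ∀ t : ℝ, 0 ≤ t → (∫⁻ s in Icc (0 : ℝ) t, ∫⁻ ω, ENNReal.ofReal |φ (X s ω)| ∂P) < ⊤)
    (hmart : Martingale
      (fun (t : ℝ≥0) ω => ψ (X t ω) - ∫ s in (0 : ℝ)..(t : ℝ), φ (X s ω))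
      (Filtration.natural (fun (t : ℝ≥0) => X t) (fun t => hsm t)) P)
    (s : ℝ) (hs : 0 ≤ s) :
    (∫ ω, ψ (X (max s 0) ω) ∂P) - (∫ ω, ψ (X (max 0 0) ω) ∂P)
      = ∫ u in (0:ℝ)..s, ∫ ω, φ (X (max u 0) ω) ∂P := by
  have hY := joint_meas X (fun t => (hsm t).measurable) hrc
  have hI : Integrable (Function.uncurry fun (u : ℝ) (ω : Ω) => φ (X (max u 0) ω))
      ((volume.restrict (uIoc 0 s)).prod P) := by
    refine ⟨(hφ.comp hY).aestronglyMeasurable, ?_⟩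
    rw [hasFiniteIntegral_iff_norm, lintegral_prod _ (by
      exact ((hφ.comp hY).norm.ennreal_ofReal).aemeasurable), uIoc_of_le hs]
    refine lt_of_le_of_lt ?_ (hφi s hs)
    refine le_trans (lintegral_mono_set Ioc_subset_Icc_self) (le_of_eq ?_)
    refine setLIntegral_congr_fun measurableSet_Icc fun u hu => ?_
    simp [Function.uncurry, max_eq_left hu.1]
  have hM : ∀ t : ℝ≥0, ∫ ω, (ψ (X t ω) - ∫ s in (0 : ℝ)..(t : ℝ), φ (X s ω)) ∂P
      = ∫ ω, (ψ (X 0 ω)) ∂P := by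
    intro t
    have := hmart.setIntegral_eq (zero_le (a := t)) (s := univ) MeasurableSet.univ
    simp only [Measure.restrict_univ] at this
    rw [← this]
    simp
  have hMs := hM ⟨s, hs⟩
  have hinner : ∀ ω, ∫ u in (0 : ℝ)..s, φ (X u ω) = ∫ u in (0 : ℝ)..s, φ (X (max u 0) ω) := by
    intro ω
    refine intervalIntegral.integral_congr fun u hu => ?_
    rw [uIcc_of_le hs] at hu
    simp [max_eq_left hu.1]
  change ∫ ω, (ψ (X s ω) - ∫ u in (0 : ℝ)..s, φ (X u ω)) ∂P = _ at hMs
  simp only [hinner] at hMs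
  have hI2 : Integrable (fun ω => ∫ u in (0 : ℝ)..s, φ (X (max u 0) ω)) P := by
    have := hI.integral_prod_right
    simp only [intervalIntegral.integral_of_le hs]
    rw [uIoc_of_le hs] at this
    exact this
  rw [integral_sub (hψi s hs) hI2, ← intervalIntegral_integral_swap hI] at hMs
  rw [max_eq_left hs, max_self]
  linarith

lemma indep_map {Ω E₁ E₂ : Type*} [MeasurableSpace Ω] (P : Measure Ω) [IsProbabilityMeasure P]
    [MeasurableSpace E₁] [MeasurableSpace E₂]
    (A : Ω → E₁) (B : Ω → E₂) (hA : Measurable A) (hB : Measurable B) (h : IndepFun A B P) :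
    P.map (fun ω => (A ω, B ω)) = (P.prod P).map (fun q : Ω × Ω => (A q.1, B q.2)) := by
  rw [h.map_prod_eq_prod_map_map hA.aemeasurable hB.aemeasurable, Measure.map_prod_map _ _ hA hB]
  rfl

/-- Section identity. -/
lemma section_id {Ω E₁ E₂ : Type*} [MeasurableSpace Ω] (P : Measure Ω) [IsProbabilityMeasure P]
    [MeasurableSpace E₁] [MeasurableSpace E₂]
    (Ψ Φ : E₁ × E₂ → ℝ) (hΨ : Measurable Ψ) (hΦ : Measurable Φ) (C : ℝ) (hΨb : ∀ x, |Ψ x| ≤ C)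
    (Y : ℝ → Ω → E₁) (hY : Measurable (fun p : ℝ × Ω => Y p.1 p.2))
    (Z : Ω → E₂) (hZ : Measurable Z) (hind : ∀ u, IndepFun (Y u) Z P)
    (s : ℝ) (hs : 0 ≤ s)
    (hm : ∀ x, (∫ ω, Ψ (Y s ω, x) ∂P) - (∫ ω, Ψ (Y 0 ω, x) ∂P)
      = ∫ u in (0:ℝ)..s, ∫ ω, Φ (Y u ω, x) ∂P)
    (hfin : ∫⁻ u in Ioc 0 s, ∫⁻ ω, ENNReal.ofReal |Φ (Y u ω, Z ω)| ∂P < ⊤) :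
    (∫ ω, Ψ (Y s ω, Z ω) ∂P) - (∫ ω, Ψ (Y 0 ω, Z ω) ∂P)
      = ∫ u in (0:ℝ)..s, ∫ ω, Φ (Y u ω, Z ω) ∂P := by
  have hYu : ∀ u, Measurable (Y u) := fun u => hY.comp (measurable_prodMk_left (x := u))
  have hmap := fun u => indep_map P (Y u) Z (hYu u) hZ (hind u)
  have hpm : ∀ u, Measurable (fun q : Ω × Ω => (Y u q.1, Z q.2)) := fun u =>
    ((hYu u).comp measurable_fst).prodMk (hZ.comp measurable_snd)
  have tr : ∀ u (G : E₁ × E₂ → ℝ), Measurable G →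
      ∫ ω, G (Y u ω, Z ω) ∂P = ∫ q, G (Y u q.1, Z q.2) ∂(P.prod P) := by
    intro u G hG
    rw [← integral_map (φ := fun ω => (Y u ω, Z ω)) ((hYu u).prodMk hZ).aemeasurable
      hG.aestronglyMeasurable, hmap u,
      integral_map (hpm u).aemeasurable hG.aestronglyMeasurable]
  have trl : ∀ u (G : E₁ × E₂ → ℝ≥0∞), Measurable G →
      ∫⁻ ω, G (Y u ω, Z ω) ∂P = ∫⁻ q, G (Y u q.1, Z q.2) ∂(P.prod P) := by
    intro u G hG
    rw [← lintegral_map (g := fun ω => (Y u ω, Z ω)) hG ((hYu u).prodMk hZ), hmap u,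
      lintegral_map hG (hpm u)]
  have hJ : Measurable (fun p : ℝ × (Ω × Ω) => Φ (Y p.1 p.2.1, Z p.2.2)) := by
    refine hΦ.comp (Measurable.prodMk ?_ (hZ.comp (by fun_prop)))
    exact hY.comp (f := fun p : ℝ × (Ω × Ω) => (p.1, p.2.1)) (by fun_prop)
  -- integrability on `(0,s] × Ω × Ω`
  have hI : Integrable (fun p : ℝ × (Ω × Ω) => Φ (Y p.1 p.2.1, Z p.2.2))
      ((volume.restrict (Ioc 0 s)).prod (P.prod P)) := by
    refine ⟨hJ.aestronglyMeasurable, ?_⟩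
    rw [hasFiniteIntegral_iff_norm, lintegral_prod _ hJ.norm.ennreal_ofReal.aemeasurable]
    refine lt_of_le_of_lt (le_of_eq ?_) hfin
    refine lintegral_congr fun u => ?_
    exact (trl u (fun x => ENNReal.ofReal |Φ x|) (hΦ.norm.ennreal_ofReal)).symm
  -- LHS
  have hΨi : ∀ u, Integrable (fun q : Ω × Ω => Ψ (Y u q.1, Z q.2)) (P.prod P) := fun u =>
    Integrable.of_bound (hΨ.comp (hpm u)).aestronglyMeasurable C (ae_of_all _ fun q => hΨb _)
  rw [tr s Ψ hΨ, tr 0 Ψ hΨ, integral_prod_symm _ (hΨi s), integral_prod_symm _ (hΨi 0),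
    ← integral_sub (hΨi s).integral_prod_right (hΨi 0).integral_prod_right]
  simp only [hm, tr _ Φ hΦ, intervalIntegral.integral_of_le hs]
  -- swap
  have hI1 := hI
  rw [← integral_prod (fun p : ℝ × (Ω × Ω) => Φ (Y p.1 p.2.1, Z p.2.2)) hI]
  let e : (ℝ × Ω) × Ω ≃ᵐ ℝ × (Ω × Ω) := MeasurableEquiv.prodAssoc
  have mp : MeasurePreserving e (((volume.restrict (Ioc 0 s)).prod P).prod P)
      ((volume.restrict (Ioc 0 s)).prod (P.prod P)) := measurePreserving_prodAssoc _ _ _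
  have hI2 : Integrable (fun p : (ℝ × Ω) × Ω => Φ (Y p.1.1 p.1.2, Z p.2))
      (((volume.restrict (Ioc 0 s)).prod P).prod P) := mp.integrable_comp_of_integrable hI
  rw [← mp.integral_comp e.measurableEmbedding]
  change _ = ∫ p : (ℝ × Ω) × Ω, Φ (Y p.1.1 p.1.2, Z p.2) ∂_
  rw [integral_prod_symm _ hI2]
  refine integral_congr_ae ?_
  filter_upwards [hI2.prod_left_ae] with ω hω
  exact (integral_prod _ hω).symm

lemma sq_int {Ω : Type*} [MeasurableSpace Ω] (P : Measure Ω) [IsProbabilityMeasure P]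
    (H : (ℝ × ℝ) × Ω → ℝ) (hH : Measurable H) (S : ℝ)
    (hfin : (∫⁻ s in Ioc (0 : ℝ) S, ∫⁻ t in Ioc (0 : ℝ) S,
        ∫⁻ ω, ENNReal.ofReal |H ((s, t), ω)| ∂P) < ⊤) :
    Integrable H (((volume.prod volume).restrict (Ioc 0 S ×ˢ Ioc 0 S)).prod P) := by
  refine ⟨hH.aestronglyMeasurable, ?_⟩
  rw [hasFiniteIntegral_iff_norm, lintegral_prod _ hH.norm.ennreal_ofReal.aemeasurable,
    ← Measure.prod_restrict, lintegral_prod _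
      (hH.norm.ennreal_ofReal.lintegral_prod_right').aemeasurable]
  exact hfin

lemma ae_sec {G : ℝ × ℝ → ℝ≥0∞} (hG : Measurable G) (S : ℝ)
    (hfin : (∫⁻ s in Ioc (0 : ℝ) S, ∫⁻ t in Ioc (0 : ℝ) S, G (s, t)) < ⊤) :
    (∀ᵐ s ∂(volume.restrict (Ioc 0 S)), ∫⁻ t in Ioc 0 (S - s), G (s, t) < ⊤) ∧
    (∀ᵐ t ∂(volume.restrict (Ioc 0 S)), ∫⁻ s in Ioc 0 (S - t), G (s, t) < ⊤) := by
  have hsub : ∀ t ∈ Ioc 0 S, Ioc 0 (S - t) ⊆ Ioc 0 S := fun t ht =>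
    Ioc_subset_Ioc_right (by linarith [ht.1])
  constructor
  · filter_upwards [ae_lt_top (hG.lintegral_prod_right') hfin.ne,
      ae_restrict_mem measurableSet_Ioc] with s hs hs2
    exact lt_of_le_of_lt (lintegral_mono_set (hsub s hs2)) hs
  · rw [lintegral_lintegral_swap (f := fun s t => G (s, t)) hG.aemeasurable] at hfin
    filter_upwards [ae_lt_top (hG.lintegral_prod_left') hfin.ne,
      ae_restrict_mem measurableSet_Ioc] with s hs hs2
    exact lt_of_le_of_lt (lintegral_mono_set (hsub s hs2)) hs

/-- **Duality with error term** (Athreya–Swart, correction to "Branching-coalescing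
particle systems", Theorem 1, a.e. part). -/
theorem duality_with_error_term_ae
    {Ω : Type*} [MeasurableSpace Ω] (P : Measure Ω) [IsProbabilityMeasure P]
    {E₁ E₂ : Type*}
    [TopologicalSpace E₁] [TopologicalSpace.MetrizableSpace E₁]
    [MeasurableSpace E₁] [BorelSpace E₁]
    [TopologicalSpace E₂] [TopologicalSpace.MetrizableSpace E₂]
    [MeasurableSpace E₂] [BorelSpace E₂]
    (Ψ Φ₁ Φ₂ : E₁ × E₂ → ℝ)
    (hΨm : Measurable Ψ) (C : ℝ) (hΨb : ∀ x, |Ψ x| ≤ C)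
    (hΦ₁m : Measurable Φ₁) (hΦ₂m : Measurable Φ₂)
    (X₁ : ℝ → Ω → E₁) (X₂ : ℝ → Ω → E₂)
    (hX₁sm : ∀ t, StronglyMeasurable (X₁ t))
    (hX₂sm : ∀ t, StronglyMeasurable (X₂ t))
    -- càdlàg sample paths on [0,∞)
    (hX₁rc : ∀ ω, ∀ t : ℝ, 0 ≤ t → ContinuousWithinAt (fun s => X₁ s ω) (Ici t) t)
    (hX₁ll : ∀ ω, ∀ t : ℝ, 0 < t →
      ∃ l, Tendsto (fun s => X₁ s ω) (nhdsWithin t (Iio t)) (nhds l))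
    (hX₂rc : ∀ ω, ∀ t : ℝ, 0 ≤ t → ContinuousWithinAt (fun s => X₂ s ω) (Ici t) t)
    (hX₂ll : ∀ ω, ∀ t : ℝ, 0 < t →
      ∃ l, Tendsto (fun s => X₂ s ω) (nhdsWithin t (Iio t)) (nhds l))
    -- X¹ and X² are independent
    (hindep : IndepFun (fun ω t => X₁ t ω) (fun ω t => X₂ t ω) P)
    -- martingale problem for X¹ (with integrability), for every x₂
    (hΨint₁ : ∀ x₂, ∀ t : ℝ, 0 ≤ t → Integrable (fun ω => Ψ (X₁ t ω, x₂)) P)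
    (hΦint₁ : ∀ x₂, ∀ t : ℝ, 0 ≤ t →
      (∫⁻ s in Icc (0 : ℝ) t, ∫⁻ ω, ENNReal.ofReal |Φ₁ (X₁ s ω, x₂)| ∂P) < ⊤)
    (hmart₁ : ∀ x₂, Martingale
      (fun (t : ℝ≥0) ω => Ψ (X₁ t ω, x₂) - ∫ s in (0 : ℝ)..(t : ℝ), Φ₁ (X₁ s ω, x₂))
      (Filtration.natural (fun (t : ℝ≥0) => X₁ t) (fun t => hX₁sm t)) P)
    -- martingale problem for X² (with integrability), for every x₁
    (hΨint₂ : ∀ x₁, ∀ t : ℝ, 0 ≤ t → Integrable (fun ω => Ψ (x₁, X₂ t ω)) P)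
    (hΦint₂ : ∀ x₁, ∀ t : ℝ, 0 ≤ t →
      (∫⁻ s in Icc (0 : ℝ) t, ∫⁻ ω, ENNReal.ofReal |Φ₂ (x₁, X₂ s ω)| ∂P) < ⊤)
    (hmart₂ : ∀ x₁, Martingale
      (fun (t : ℝ≥0) ω => Ψ (x₁, X₂ t ω) - ∫ s in (0 : ℝ)..(t : ℝ), Φ₂ (x₁, X₂ s ω))
      (Filtration.natural (fun (t : ℝ≥0) => X₂ t) (fun t => hX₂sm t)) P)
    -- double integrability assumption (1.7)
    (hΦΦ₁ : ∀ T : ℝ, 0 ≤ T →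
      (∫⁻ s in Icc (0 : ℝ) T, ∫⁻ t in Icc (0 : ℝ) T,
        ∫⁻ ω, ENNReal.ofReal |Φ₁ (X₁ s ω, X₂ t ω)| ∂P) < ⊤)
    (hΦΦ₂ : ∀ T : ℝ, 0 ≤ T →
      (∫⁻ s in Icc (0 : ℝ) T, ∫⁻ t in Icc (0 : ℝ) T,
        ∫⁻ ω, ENNReal.ofReal |Φ₂ (X₁ s ω, X₂ t ω)| ∂P) < ⊤) :
    ∀ᵐ T ∂(volume.restrict (Ici (0 : ℝ))),
      (∫ ω, Ψ (X₁ T ω, X₂ 0 ω) ∂P) - (∫ ω, Ψ (X₁ 0 ω, X₂ T ω) ∂P)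
        = ∫ t in (0 : ℝ)..T,
            ∫ ω, (Φ₁ (X₁ t ω, X₂ (T - t) ω) - Φ₂ (X₁ t ω, X₂ (T - t) ω)) ∂P := by
  have hY₁ := joint_meas X₁ (fun t => (hX₁sm t).measurable) hX₁rc
  have hY₂ := joint_meas X₂ (fun t => (hX₂sm t).measurable) hX₂rc
  have hpair : Measurable (fun p : (ℝ × ℝ) × Ω =>
      (X₁ (max p.1.1 0) p.2, X₂ (max p.1.2 0) p.2)) :=
    (hY₁.comp (f := fun p : (ℝ × ℝ) × Ω => (p.1.1, p.2)) (by fun_prop)).prodMk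
      (hY₂.comp (f := fun p : (ℝ × ℝ) × Ω => (p.1.2, p.2)) (by fun_prop))
  have hind : ∀ s t, IndepFun (X₁ s) (X₂ t) P := fun s t =>
    hindep.comp (measurable_pi_apply s) (measurable_pi_apply t)
  have fin : ∀ Φ : E₁ × E₂ → ℝ, (∀ T : ℝ, 0 ≤ T →
      (∫⁻ s in Icc (0 : ℝ) T, ∫⁻ t in Icc (0 : ℝ) T,
        ∫⁻ ω, ENNReal.ofReal |Φ (X₁ s ω, X₂ t ω)| ∂P) < ⊤) → ∀ S : ℝ,
      (∫⁻ s in Ioc (0 : ℝ) S, ∫⁻ t in Ioc (0 : ℝ) S,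
        ∫⁻ ω, ENNReal.ofReal |Φ (X₁ (max s 0) ω, X₂ (max t 0) ω)| ∂P) < ⊤ := by
    intro Φ h S
    rcases lt_or_ge S 0 with hS | hS
    · simp [Ioc_eq_empty_of_le hS.le]
    · refine lt_of_le_of_lt ?_ (h S hS)
      refine le_trans (lintegral_mono fun s => lintegral_mono_set Ioc_subset_Icc_self) ?_
      refine le_trans (lintegral_mono_set Ioc_subset_Icc_self) (le_of_eq ?_)
      refine setLIntegral_congr_fun measurableSet_Icc fun s hs => ?_
      refine setLIntegral_congr_fun measurableSet_Icc fun t ht => ?_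
      simp only [max_eq_left hs.1, max_eq_left ht.1]
  have sq₁ := fun S => sq_int P _ (hΦ₁m.comp hpair) S (fin Φ₁ hΦΦ₁ S)
  have sq₂ := fun S => sq_int P _ (hΦ₂m.comp hpair) S (fin Φ₂ hΦΦ₂ S)
  have mΦ₁ : Measurable (fun p : ℝ × ℝ =>
      ∫⁻ ω, ENNReal.ofReal |Φ₁ (X₁ (max p.1 0) ω, X₂ (max p.2 0) ω)| ∂P) :=
    ((hΦ₁m.comp hpair).norm.ennreal_ofReal).lintegral_prod_right'
  have mΦ₂ : Measurable (fun p : ℝ × ℝ =>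
      ∫⁻ ω, ENNReal.ofReal |Φ₂ (X₁ (max p.1 0) ω, X₂ (max p.2 0) ω)| ∂P) :=
    ((hΦ₂m.comp hpair).norm.ennreal_ofReal).lintegral_prod_right'
  have main := core
    (fun p => ∫ ω, Ψ (X₁ (max p.1 0) ω, X₂ (max p.2 0) ω) ∂P)
    (fun p => ∫ ω, Φ₁ (X₁ (max p.1 0) ω, X₂ (max p.2 0) ω) ∂P)
    (fun p => ∫ ω, Φ₂ (X₁ (max p.1 0) ω, X₂ (max p.2 0) ω) ∂P)
    (fun p => ∫ ω, (Φ₁ (X₁ (max p.1 0) ω, X₂ (max p.2 0) ω)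
      - Φ₂ (X₁ (max p.1 0) ω, X₂ (max p.2 0) ω)) ∂P) C
    ((hΨm.comp hpair).stronglyMeasurable.integral_prod_right').measurable
    ?_ (fun S => (sq₁ S).integral_prod_left) (fun S => (sq₂ S).integral_prod_left) ?_ ?_ ?_
  · filter_upwards [main, ae_restrict_mem measurableSet_Ici] with T hT hT0
    have hT0' : (0:ℝ) ≤ T := hT0
    simp only [max_eq_left hT0', max_self] at hT
    rw [hT]
    refine intervalIntegral.integral_congr fun t ht => ?_
    rw [uIcc_of_le hT0'] at ht
    have h2 : 0 ≤ T - t := by linarith [ht.2]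
    simp only [max_eq_left ht.1, max_eq_left h2]
  · intro p
    have := norm_integral_le_of_norm_le_const (μ := P) (C := C)
      (f := fun ω => Ψ (X₁ (max p.1 0) ω, X₂ (max p.2 0) ω)) (ae_of_all _ fun ω => hΨb _)
    simpa using this
  · intro S
    filter_upwards [(sq₁ S).prod_right_ae, (sq₂ S).prod_right_ae] with p h1 h2
    exact integral_sub h1 h2
  · intro S
    filter_upwards [(ae_sec mΦ₁ S (fin Φ₁ hΦΦ₁ S)).2,
      ae_restrict_mem measurableSet_Ioc] with t ht htS
    exact section_id P Ψ Φ₁ hΨm hΦ₁m C hΨb (fun u => X₁ (max u 0)) hY₁ (X₂ (max t 0))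
      (hX₂sm _).measurable (fun u => hind _ _) (S - t) (by linarith [htS.2])
      (fun x => mart_exp P X₁ hX₁sm hX₁rc (fun y => Ψ (y, x)) (fun y => Φ₁ (y, x))
        (hΦ₁m.comp (by fun_prop)) (hΨint₁ x) (hΦint₁ x) (hmart₁ x) _ (by linarith [htS.2])) ht
  · intro S
    filter_upwards [(ae_sec mΦ₂ S (fin Φ₂ hΦΦ₂ S)).1,
      ae_restrict_mem measurableSet_Ioc] with t ht htS
    exact section_id P (Ψ ∘ Prod.swap) (Φ₂ ∘ Prod.swap) (hΨm.comp measurable_swap)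
      (hΦ₂m.comp measurable_swap) C (fun x => hΨb _) (fun u => X₂ (max u 0)) hY₂ (X₁ (max t 0))
      (hX₁sm _).measurable (fun u => (hind _ _).symm) (S - t) (by linarith [htS.2])
      (fun x => mart_exp P X₂ hX₂sm hX₂rc (fun y => Ψ (x, y)) (fun y => Φ₂ (x, y))
        (hΦ₂m.comp (by fun_prop)) (hΨint₂ x) (hΦint₂ x) (hmart₂ x) _ (by linarith [htS.2])) ht
end

section
/- Let E₁ and E₂ be metrizable topological spaces with their Borel σ-algebras, let Ψ : E₁ × E₂ → ℝ be bounded and jointly Borel measurable, and let Φ₁, Φ₂ : E₁ × E₂ → ℝ be jointly Borel measurable. Let X¹ and X² be independent càdlàg processes with values in E₁ and E₂ such that for each x₂ ∈ E₂ the process t ↦ Ψ(X¹_t, x₂) − ∫₀ᵗ Φ₁(X¹_s, x₂) ds is a martingale with respect to the filtration generated by X¹ (with E[|Ψ(X¹_t,x₂)|] < ∞ and ∫₀ᵗ E[|Φ₁(X¹_s,x₂)|] ds < ∞ for all t ≥ 0), and symmetrically for X² and Φ₂. Then the function T ↦ E[Ψ(X¹_T, X²_0)] − E[Ψ(X¹_0,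 X²_T)] is continuous on [0,∞). -/
open MeasureTheory ProbabilityTheory Filter Set
open scoped NNReal ENNReal

lemma aux_joint {Ω E : Type*} [MeasurableSpace Ω] [TopologicalSpace E]
    [TopologicalSpace.MetrizableSpace E] [MeasurableSpace E] [BorelSpace E]
    (X : ℝ → Ω → E) (hX : ∀ t, Measurable (X t))
    (hrc : ∀ ω, ∀ t : ℝ, 0 ≤ t → ContinuousWithinAt (fun s => X s ω) (Ici t) t) :
    Measurable (fun p : ℝ × Ω => X (max p.1 0) p.2) := by
  let d : ℕ → ℝ → ℝ := fun n s => ((⌊((n : ℝ) + 1) * max s 0⌋₊ : ℝ) + 1) / ((n : ℝ) + 1)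
  have hd1 : ∀ n s, max s 0 ≤ d n s := by
    intro n s
    have hn : (0 : ℝ) < (n : ℝ) + 1 := by positivity
    rw [le_div_iff₀ hn, mul_comm]
    exact (Nat.lt_floor_add_one _).le
  have hd2 : ∀ n s, d n s ≤ max s 0 + 1 / ((n : ℝ) + 1) := by
    intro n s
    have hn : (0 : ℝ) < (n : ℝ) + 1 := by positivity
    have h0 : 0 ≤ ((n : ℝ) + 1) * max s 0 := by positivity
    have := Nat.floor_le h0
    simp only [d]
    rw [div_le_iff₀ hn, add_mul (max s 0), one_div, inv_mul_cancel₀ hn.ne']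
    linarith
  have hdt : ∀ s, Tendsto (fun n => d n s) atTop (nhdsWithin (max s 0) (Ici (max s 0))) := by
    intro s
    refine tendsto_nhdsWithin_iff.2 ⟨?_, Eventually.of_forall fun n => hd1 n s⟩
    refine tendsto_of_tendsto_of_tendsto_of_le_of_le tendsto_const_nhds ?_
      (fun n => hd1 n s) (fun n => hd2 n s)
    simpa using (tendsto_const_nhds (x := max s 0)).add
      (tendsto_one_div_add_atTop_nhds_zero_nat (𝕜 := ℝ))
  refine measurable_of_tendsto_metrizable (f := fun n (p : ℝ × Ω) => X (d n p.1) p.2) ?_ ?_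
  · intro n
    have h1 : Measurable (fun q : Ω × ℕ => X (((q.2 : ℝ) + 1) / ((n : ℝ) + 1)) q.1) :=
      measurable_from_prod_countable_left fun k => hX (((k : ℝ) + 1) / ((n : ℝ) + 1))
    have h2 : Measurable (fun p : ℝ × Ω => (p.2, ⌊((n : ℝ) + 1) * max p.1 0⌋₊)) := by
      fun_prop
    exact h1.comp h2
  · rw [tendsto_pi_nhds]
    rintro ⟨s, ω⟩
    exact (hrc ω (max s 0) (le_max_right _ _)).tendsto.comp (hdt s)

lemma aux_single {Ω E : Type*} [MeasurableSpace Ω] (P : Measure Ω) [IsProbabilityMeasure P]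
    [TopologicalSpace E]
    [TopologicalSpace.MetrizableSpace E] [MeasurableSpace E] [BorelSpace E]
    (ψ φ : E → ℝ) (hφ : Measurable φ)
    (X : ℝ → Ω → E) (hX : ∀ t, StronglyMeasurable (X t))
    (hrc : ∀ ω, ∀ t : ℝ, 0 ≤ t → ContinuousWithinAt (fun s => X s ω) (Ici t) t)
    (hψint : ∀ t : ℝ, 0 ≤ t → Integrable (fun ω => ψ (X t ω)) P)
    (hφint : ∀ t : ℝ, 0 ≤ t →
      (∫⁻ s in Icc (0 : ℝ) t, ∫⁻ ω, ENNReal.ofReal |φ (X s ω)| ∂P) < ⊤)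
    (hmart : Martingale
      (fun (t : ℝ≥0) ω => ψ (X t ω) - ∫ s in (0 : ℝ)..(t : ℝ), φ (X s ω))
      (Filtration.natural (fun (t : ℝ≥0) => X t) (fun t => hX t)) P) :
    ContinuousOn (fun T : ℝ => ∫ ω, ψ (X T ω) ∂P) (Ici 0) := by
  have hj : Measurable (fun p : ℝ × Ω => φ (X (max p.1 0) p.2)) :=
    hφ.comp (aux_joint X (fun t => (hX t).measurable) hrc)
  have hint : ∀ t : ℝ, 0 ≤ t → Integrable (fun p : ℝ × Ω => φ (X (max p.1 0) p.2))
      ((volume.restrict (Icc 0 t)).prod P) := by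
    intro t ht
    refine ⟨hj.aestronglyMeasurable, ?_⟩
    rw [HasFiniteIntegral, lintegral_prod _ hj.enorm.aemeasurable]
    refine lt_of_eq_of_lt ?_ (hφint t ht)
    refine setLIntegral_congr_fun measurableSet_Icc fun s hs => ?_
    simp only [max_eq_left hs.1]
    refine lintegral_congr fun ω => ?_
    rw [← Real.enorm_eq_ofReal_abs]
  have key : ∀ t : ℝ, 0 ≤ t → ∫ ω, ψ (X t ω) ∂P
      = ∫ ω, ψ (X 0 ω) ∂P + ∫ s in (0 : ℝ)..t, ∫ ω, φ (X (max s 0) ω) ∂P := by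
    intro t ht
    have hioc : Integrable (fun p : ℝ × Ω => φ (X (max p.1 0) p.2))
        ((volume.restrict (Ioc 0 t)).prod P) := by
      rw [restrict_Ioc_eq_restrict_Icc]; exact hint t ht
    have heq : ∀ ω, ∫ s in (0 : ℝ)..t, φ (X s ω) = ∫ s in Ioc 0 t, φ (X (max s 0) ω) := by
      intro ω
      rw [intervalIntegral.integral_of_le ht]
      refine setIntegral_congr_fun measurableSet_Ioc fun s hs => ?_
      simp only [max_eq_left hs.1.le]
    have hI : Integrable (fun ω => ∫ s in (0 : ℝ)..t, φ (X s ω)) P := by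
      simp only [heq]
      exact hioc.integral_prod_right
    have hm := hmart.setIntegral_eq (i := 0) (j := t.toNNReal) zero_le MeasurableSet.univ
    simp only [setIntegral_univ, NNReal.coe_zero, intervalIntegral.integral_same, sub_zero,
      Real.coe_toNNReal t ht] at hm
    rw [hm, integral_sub (hψint t ht) hI]
    simp only [heq]
    rw [intervalIntegral.integral_of_le ht,
      ← integral_integral_swap (f := fun s ω => φ (X (max s 0) ω)) hioc]
    ring
  intro T hT
  have hT' : (0 : ℝ) ≤ T := hT
  have hc : ContinuousOn (fun t => ∫ s in (0 : ℝ)..t, ∫ ω, φ (X (max s 0) ω) ∂P)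
      (uIcc 0 (T + 1)) := by
    apply intervalIntegral.continuousOn_primitive_interval
    rw [uIcc_of_le (by linarith)]
    exact (hint (T + 1) (by linarith)).integral_prod_left
  rw [uIcc_of_le (by linarith)] at hc
  have hc2 : ContinuousWithinAt (fun t => ∫ s in (0 : ℝ)..t, ∫ ω, φ (X (max s 0) ω) ∂P)
      (Ici 0) T := by
    refine (hc T ⟨hT', by linarith⟩).mono_of_mem_nhdsWithin ?_
    rw [← Ici_inter_Iic]
    exact inter_mem_nhdsWithin _ (Iic_mem_nhds (by linarith))
  exact (continuousWithinAt_const.add hc2).congr (fun t ht => key t ht) (key T hT')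

lemma aux_pair {Ω E F : Type*} [MeasurableSpace Ω] (P : Measure Ω) [IsProbabilityMeasure P]
    [MeasurableSpace E] [MeasurableSpace F]
    (Ψ : E × F → ℝ) (hΨm : Measurable Ψ) (C : ℝ) (hΨb : ∀ x, |Ψ x| ≤ C)
    (X : ℝ → Ω → E) (hX : ∀ t, Measurable (X t)) (Y : Ω → F) (hY : Measurable Y)
    (hind : ∀ t, IndepFun (X t) Y P)
    (hc : ∀ y, ContinuousOn (fun T : ℝ => ∫ ω, Ψ (X T ω, y) ∂P) (Ici 0)) :
    ContinuousOn (fun T : ℝ => ∫ ω, Ψ (X T ω, Y ω) ∂P) (Ici 0) := by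
  have hrep : ∀ T, ∫ ω, Ψ (X T ω, Y ω) ∂P = ∫ ω', ∫ ω, Ψ (X T ω, Y ω') ∂P ∂P := by
    intro T
    have hp : Measurable (fun ω => (X T ω, Y ω)) := (hX T).prodMk hY
    have hmap := (indepFun_iff_map_prod_eq_prod_map_map (hX T).aemeasurable hY.aemeasurable).1
      (hind T)
    rw [Measure.map_prod_map _ _ (hX T) hY] at hmap
    have hq : Measurable (Prod.map (X T) Y) := (hX T).prodMap hY
    have e1 := integral_map hp.aemeasurable (μ := P) (f := Ψ) hΨm.aestronglyMeasurable
    rw [hmap, integral_map hq.aemeasurable hΨm.aestronglyMeasurable] at e1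
    rw [← e1, integral_prod_symm]
    · rfl
    · exact Integrable.of_bound (hΨm.comp hq).aestronglyMeasurable C
        (Eventually.of_forall fun p => hΨb _)
  simp only [hrep]
  refine continuousOn_of_dominated (bound := fun _ => C) ?_ ?_ (integrable_const C) ?_
  · intro T _
    have : Measurable (fun p : Ω × Ω => Ψ (X T p.2, Y p.1)) :=
      hΨm.comp (((hX T).comp measurable_snd).prodMk (hY.comp measurable_fst))
    exact (this.stronglyMeasurable.integral_prod_right' (ν := P)).aestronglyMeasurable
  · intro T _
    refine Eventually.of_forall fun ω' => ?_
    have := norm_integral_le_of_norm_le_const (μ := P) (f := fun ω => Ψ (X T ω, Y ω')) (C := C)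
      (Eventually.of_forall fun ω => hΨb _)
    simpa using this
  · exact Eventually.of_forall fun ω' => hc _


/-- **Duality with error term** (Athreya–Swart, correction to "Branching-coalescing
particle systems", Theorem 1, continuity part). -/
theorem duality_lhs_continuous
    {Ω : Type*} [MeasurableSpace Ω] (P : Measure Ω) [IsProbabilityMeasure P]
    {E₁ E₂ : Type*}
    [TopologicalSpace E₁] [TopologicalSpace.MetrizableSpace E₁]
    [MeasurableSpace E₁] [BorelSpace E₁]
    [TopologicalSpace E₂] [TopologicalSpace.MetrizableSpace E₂]
    [MeasurableSpace E₂] [BorelSpace E₂]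
    (Ψ Φ₁ Φ₂ : E₁ × E₂ → ℝ)
    (hΨm : Measurable Ψ) (C : ℝ) (hΨb : ∀ x, |Ψ x| ≤ C)
    (hΦ₁m : Measurable Φ₁) (hΦ₂m : Measurable Φ₂)
    (X₁ : ℝ → Ω → E₁) (X₂ : ℝ → Ω → E₂)
    (hX₁sm : ∀ t, StronglyMeasurable (X₁ t))
    (hX₂sm : ∀ t, StronglyMeasurable (X₂ t))
    -- càdlàg sample paths on [0,∞)
    (hX₁rc : ∀ ω, ∀ t : ℝ, 0 ≤ t → ContinuousWithinAt (fun s => X₁ s ω) (Ici t) t)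
    (hX₁ll : ∀ ω, ∀ t : ℝ, 0 < t →
      ∃ l, Tendsto (fun s => X₁ s ω) (nhdsWithin t (Iio t)) (nhds l))
    (hX₂rc : ∀ ω, ∀ t : ℝ, 0 ≤ t → ContinuousWithinAt (fun s => X₂ s ω) (Ici t) t)
    (hX₂ll : ∀ ω, ∀ t : ℝ, 0 < t →
      ∃ l, Tendsto (fun s => X₂ s ω) (nhdsWithin t (Iio t)) (nhds l))
    -- X¹ and X² are independent
    (hindep : IndepFun (fun ω t => X₁ t ω) (fun ω t => X₂ t ω) P)
    -- martingale problem for X¹ (with integrability), for every x₂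
    (hΨint₁ : ∀ x₂, ∀ t : ℝ, 0 ≤ t → Integrable (fun ω => Ψ (X₁ t ω, x₂)) P)
    (hΦint₁ : ∀ x₂, ∀ t : ℝ, 0 ≤ t →
      (∫⁻ s in Icc (0 : ℝ) t, ∫⁻ ω, ENNReal.ofReal |Φ₁ (X₁ s ω, x₂)| ∂P) < ⊤)
    (hmart₁ : ∀ x₂, Martingale
      (fun (t : ℝ≥0) ω => Ψ (X₁ t ω, x₂) - ∫ s in (0 : ℝ)..(t : ℝ), Φ₁ (X₁ s ω, x₂))
      (Filtration.natural (fun (t : ℝ≥0) => X₁ t) (fun t => hX₁sm t)) P)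
    -- martingale problem for X² (with integrability), for every x₁
    (hΨint₂ : ∀ x₁, ∀ t : ℝ, 0 ≤ t → Integrable (fun ω => Ψ (x₁, X₂ t ω)) P)
    (hΦint₂ : ∀ x₁, ∀ t : ℝ, 0 ≤ t →
      (∫⁻ s in Icc (0 : ℝ) t, ∫⁻ ω, ENNReal.ofReal |Φ₂ (x₁, X₂ s ω)| ∂P) < ⊤)
    (hmart₂ : ∀ x₁, Martingale
      (fun (t : ℝ≥0) ω => Ψ (x₁, X₂ t ω) - ∫ s in (0 : ℝ)..(t : ℝ), Φ₂ (x₁, X₂ s ω))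
      (Filtration.natural (fun (t : ℝ≥0) => X₂ t) (fun t => hX₂sm t)) P)    :
    ContinuousOn
      (fun T : ℝ => (∫ ω, Ψ (X₁ T ω, X₂ 0 ω) ∂P) - ∫ ω, Ψ (X₁ 0 ω, X₂ T ω) ∂P)
      (Ici (0 : ℝ)) := by

  have h1 := aux_pair P Ψ hΨm C hΨb X₁ (fun t => (hX₁sm t).measurable) (X₂ 0)
    (hX₂sm 0).measurable
    (fun t => hindep.comp (measurable_pi_apply t) (measurable_pi_apply 0))
    (fun y => aux_single P (fun x => Ψ (x, y)) (fun x => Φ₁ (x, y))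
      (hΦ₁m.comp measurable_prodMk_right) X₁ hX₁sm hX₁rc (hΨint₁ y) (hΦint₁ y) (hmart₁ y))
  have h2 := aux_pair P (fun p => Ψ p.swap) (hΨm.comp measurable_swap) C (fun p => hΨb _)
    X₂ (fun t => (hX₂sm t).measurable) (X₁ 0) (hX₁sm 0).measurable
    (fun t => hindep.symm.comp (measurable_pi_apply t) (measurable_pi_apply 0))
    (fun x => aux_single P (fun y => Ψ (x, y)) (fun y => Φ₂ (x, y))
      (hΦ₂m.comp measurable_prodMk_left) X₂ hX₂sm hX₂rc (hΨint₂ x) (hΦint₂ x) (hmart₂ x))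
  exact h1.sub h2
end

section
/- Let E₁ and E₂ be metrizable topological spaces with their Borel σ-algebras, let Ψ : E₁ × E₂ → ℝ be bounded and jointly Borel measurable, and let Φ₁, Φ₂ : E₁ × E₂ → ℝ be jointly Borel measurable. Let X¹ and X² be independent càdlàg processes with values in E₁ and E₂ such that for each x₂ ∈ E₂ the process t ↦ Ψ(X¹_t, x₂) − ∫₀ᵗ Φ₁(X¹_s, x₂) ds is a martingale with respect to the filtration generated by X¹ (with the integrability conditions E[|Ψ(X¹_t,x₂)|] < ∞ and ∫₀ᵗ E[|Φ₁(X¹_s,x₂)|] ds < ∞ for all t), and symmetrically for X² and Φ₂. Assume ∫₀ᵀ∫₀ᵀ E[|Φᵢ(X¹_s, X²_t)|] ds dt < ∞ for all T ≥ 0, i = 1,2. If Φ₁(x₁, x₂) ≤ Φ₂(x₁, x₂) for all x₁ ∈ E₁ and x₂ ∈ E₂, then E[Ψ(X¹_T, X²_0)] ≤ E[Ψ(X¹_0, X²_T)] for every T ∈ [0,∞). -/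
open MeasureTheory ProbabilityTheory Filter Set
open scoped NNReal ENNReal


section core
variable {Ω : Type*} [MeasurableSpace Ω] {P : Measure Ω} [IsProbabilityMeasure P]
    {E₁ E₂ : Type*} [MeasurableSpace E₁] [MeasurableSpace E₂]

lemma indep_law {A : Ω → E₁} {B : Ω → E₂} (hA : Measurable A) (hB : Measurable B)
    (h : IndepFun A B P) :
    P.map (fun ω => (A ω, B ω)) = (P.prod P).map (Prod.map A B) := by
  rw [(indepFun_iff_map_prod_eq_prod_map_map hA.aemeasurable hB.aemeasurable).1 h,
    Measure.map_prod_map _ _ hA hB]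

lemma bdd_integrable {α : Type*} [MeasurableSpace α] {μ : Measure α} [IsFiniteMeasure μ]
    {f : α → ℝ} (hf : Measurable f) {C : ℝ} (hb : ∀ x, |f x| ≤ C) : Integrable f μ :=
  Integrable.of_bound hf.aestronglyMeasurable C (Eventually.of_forall hb)

lemma bdd_integral {α : Type*} [MeasurableSpace α] {μ : Measure α} [IsProbabilityMeasure μ]
    {f : α → ℝ} {C : ℝ} (hb : ∀ x, |f x| ≤ C) : |∫ x, f x ∂μ| ≤ C := by
  have := norm_integral_le_of_norm_le_const (μ := μ) (f := f) (C := C) (Eventually.of_forall hb)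
  simpa using this

lemma indep_integral {A : Ω → E₁} {B : Ω → E₂} (hA : Measurable A) (hB : Measurable B)
    (h : IndepFun A B P) {f : E₁ × E₂ → ℝ} (hf : Measurable f) {C : ℝ} (hb : ∀ x, |f x| ≤ C) :
    ∫ ω, f (A ω, B ω) ∂P = ∫ ω', ∫ ω, f (A ω, B ω') ∂P ∂P := by
  rw [← integral_map (φ := fun ω => (A ω, B ω)) (hA.prodMk hB).aemeasurable
    hf.aestronglyMeasurable, indep_law hA hB h,
    integral_map (hA.prodMap hB).aemeasurable hf.aestronglyMeasurable, integral_prod_symm]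
  · rfl
  · exact bdd_integrable (hf.comp (hA.prodMap hB)) (fun x => hb _)

lemma indep_lintegral {A : Ω → E₁} {B : Ω → E₂} (hA : Measurable A) (hB : Measurable B)
    (h : IndepFun A B P) {f : E₁ × E₂ → ℝ≥0∞} (hf : Measurable f) :
    ∫⁻ ω, f (A ω, B ω) ∂P = ∫⁻ ω, ∫⁻ ω', f (A ω, B ω') ∂P ∂P := by
  rw [← lintegral_map (g := fun ω => (A ω, B ω)) hf (hA.prodMk hB), indep_law hA hB h,
    lintegral_map hf (hA.prodMap hB), lintegral_prod]
  · rfl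
  · exact (hf.comp (hA.prodMap hB)).aemeasurable

lemma side {Ψ Φ : E₁ × E₂ → ℝ} (hΨ : Measurable Ψ) {C : ℝ} (hb : ∀ x, |Ψ x| ≤ C)
    {Y₁ : ℝ → Ω → E₁} {Y₂ : ℝ → Ω → E₂}
    (h₁ : Measurable (fun p : ℝ × Ω => Y₁ p.1 p.2)) (h₂ : Measurable (fun p : ℝ × Ω => Y₂ p.1 p.2))
    (hneg : ∀ s ≤ 0, Y₁ s = Y₁ 0) (hind : ∀ s t, IndepFun (Y₁ s) (Y₂ t) P)
    (hstep : ∀ y, ∀ t : ℝ, 0 ≤ t → ∫ ω, Ψ (Y₁ t ω, y) ∂P - ∫ ω, Ψ (Y₁ 0 ω, y) ∂P =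
      ∫ p, Φ (Y₁ p.1 p.2, y) ∂((volume.restrict (Ioc 0 t)).prod P))
    {S T : ℝ} (hT : 0 ≤ T) (hTS : T ≤ S) :
    (∫ t in (0 : ℝ)..T, ∫ ω, Ψ (Y₁ (T - t) ω, Y₂ t ω) ∂P)
      - ∫ t in (0 : ℝ)..T, ∫ ω, Ψ (Y₁ 0 ω, Y₂ t ω) ∂P =
    ∫ q, ∫ p, {p : ℝ × Ω | p.1 ≤ T - q.1}.indicator (fun p => Φ (Y₁ p.1 p.2, Y₂ q.1 q.2)) p
      ∂((volume.restrict (Ioc 0 S)).prod P) ∂((volume.restrict (Ioc 0 S)).prod P) := by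
  have m₁ : ∀ t, Measurable (Y₁ t) := fun t => h₁.comp measurable_prodMk_left
  have m₂ : ∀ t, Measurable (Y₂ t) := fun t => h₂.comp measurable_prodMk_left
  have hg : Measurable (fun z : ℝ × E₂ => ∫ ω, Ψ (Y₁ z.1 ω, z.2) ∂P) := by
    have : Measurable (fun w : (ℝ × E₂) × Ω => Ψ (Y₁ w.1.1 w.2, w.1.2)) := by
      refine hΨ.comp (Measurable.prodMk ?_ (by fun_prop))
      exact h₁.comp (f := fun w : (ℝ × E₂) × Ω => (w.1.1, w.2)) (by fun_prop)
    exact this.stronglyMeasurable.integral_prod_right'.measurable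
  have hF : ∀ s t, ∫ ω, Ψ (Y₁ s ω, Y₂ t ω) ∂P = ∫ ω', ∫ ω, Ψ (Y₁ s ω, Y₂ t ω') ∂P ∂P :=
    fun s t => indep_integral (m₁ s) (m₂ t) (hind s t) hΨ hb
  -- measurability of the outer functions
  have hFm : ∀ a : ℝ → ℝ, Measurable a →
      Measurable (fun t => ∫ ω, Ψ (Y₁ (a t) ω, Y₂ t ω) ∂P) := by
    intro a ha
    have : Measurable (fun w : ℝ × Ω => Ψ (Y₁ (a w.1) w.2, Y₂ w.1 w.2)) := by
      refine hΨ.comp (Measurable.prodMk ?_ h₂)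
      exact h₁.comp (f := fun w : ℝ × Ω => (a w.1, w.2)) (by fun_prop)
    exact this.stronglyMeasurable.integral_prod_right'.measurable
  have hFi : ∀ a : ℝ → ℝ, Measurable a → ∀ (u : ℝ),
      Integrable (fun t => ∫ ω, Ψ (Y₁ (a t) ω, Y₂ t ω) ∂P) (volume.restrict (Ioc 0 u)) :=
    fun a ha u => bdd_integrable (hFm a ha) (fun x => bdd_integral (fun _ => hb _))
  have hgi : ∀ a : ℝ → ℝ, Measurable a →
      Integrable (fun q : ℝ × Ω => ∫ ω, Ψ (Y₁ (a q.1) ω, Y₂ q.1 q.2) ∂P)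
        ((volume.restrict (Ioc 0 S)).prod P) := by
    intro a ha
    refine bdd_integrable ?_ (fun x => bdd_integral (fun _ => hb _))
    exact hg.comp (f := fun q : ℝ × Ω => (a q.1, Y₂ q.1 q.2)) (by fun_prop)
  have inner : ∀ᵐ q ∂((volume.restrict (Ioc (0 : ℝ) S)).prod P),
      ∫ p, {p : ℝ × Ω | p.1 ≤ T - q.1}.indicator (fun p => Φ (Y₁ p.1 p.2, Y₂ q.1 q.2)) p
      ∂((volume.restrict (Ioc 0 S)).prod P) =
      ∫ ω, Ψ (Y₁ (T - q.1) ω, Y₂ q.1 q.2) ∂P - ∫ ω, Ψ (Y₁ 0 ω, Y₂ q.1 q.2) ∂P := by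
    have hae : ∀ᵐ q ∂((volume.restrict (Ioc (0 : ℝ) S)).prod P), q.1 ∈ Ioc 0 S :=
      Measure.quasiMeasurePreserving_fst.ae (ae_restrict_mem measurableSet_Ioc)
    filter_upwards [hae] with q hq
    have hs : {p : ℝ × Ω | p.1 ≤ T - q.1} = Iic (T - q.1) ×ˢ univ := by
      ext p; simp
    have hc : Y₁ (T - q.1) = Y₁ (max (T - q.1) 0) := by
      rcases le_total (T - q.1) 0 with h | h
      · rw [max_eq_right h, hneg _ h]
      · rw [max_eq_left h]
    rw [hs, integral_indicator (measurableSet_Iic.prod MeasurableSet.univ), ← Measure.prod_restrict,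
      Measure.restrict_restrict measurableSet_Iic, Measure.restrict_univ, hc,
      hstep _ _ (le_max_right _ _)]
    congr 3
    ext r
    simp only [mem_inter_iff, mem_Iic, mem_Ioc, le_max_iff]
    have := hq.1
    constructor
    · rintro ⟨a, b, c⟩; exact ⟨b, Or.inl a⟩
    · rintro ⟨a, b | b⟩
      · exact ⟨b, a, by linarith⟩
      · linarith
  rw [integral_congr_ae inner, integral_sub (hgi (fun t => T - t) (by fun_prop))
      (hgi (fun _ => 0) measurable_const),
    integral_prod _ (hgi (fun t => T - t) (by fun_prop)),
    integral_prod _ (hgi (fun _ => 0) measurable_const)]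
  simp only [← hF]
  rw [← integral_sub (hFi (fun t => T - t) (by fun_prop) S) (hFi (fun _ => 0) measurable_const S),
    intervalIntegral.integral_of_le hT, intervalIntegral.integral_of_le hT,
    ← integral_sub (hFi (fun t => T - t) (by fun_prop) T) (hFi (fun _ => 0) measurable_const T)]
  symm
  refine setIntegral_eq_of_subset_of_forall_sdiff_eq_zero measurableSet_Ioc
    (Ioc_subset_Ioc_right hTS) ?_
  rintro t ⟨ht, ht'⟩
  have : T - t ≤ 0 := by
    by_contra hh
    exact ht' ⟨ht.1, by linarith⟩
  rw [hneg _ this, sub_self]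

lemma cont {Ψ Φ : E₁ × E₂ → ℝ} (hΨ : Measurable Ψ) {C : ℝ} (hb : ∀ x, |Ψ x| ≤ C)
    {Y₁ : ℝ → Ω → E₁} {B : Ω → E₂}
    (h₁ : Measurable (fun p : ℝ × Ω => Y₁ p.1 p.2)) (hB : Measurable B)
    (hneg : ∀ s ≤ 0, Y₁ s = Y₁ 0) (hind : ∀ s, IndepFun (Y₁ s) B P)
    (hint : ∀ y, ∀ t : ℝ, 0 ≤ t →
      Integrable (fun p : ℝ × Ω => Φ (Y₁ p.1 p.2, y)) ((volume.restrict (Ioc 0 t)).prod P))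
    (hstep : ∀ y, ∀ t : ℝ, 0 ≤ t → ∫ ω, Ψ (Y₁ t ω, y) ∂P - ∫ ω, Ψ (Y₁ 0 ω, y) ∂P =
      ∫ p, Φ (Y₁ p.1 p.2, y) ∂((volume.restrict (Ioc 0 t)).prod P)) :
    Continuous (fun s => ∫ ω, Ψ (Y₁ s ω, B ω) ∂P) := by
  have m₁ : ∀ t, Measurable (Y₁ t) := fun t => h₁.comp measurable_prodMk_left
  have hF : ∀ s, ∫ ω, Ψ (Y₁ s ω, B ω) ∂P = ∫ ω', ∫ ω, Ψ (Y₁ s ω, B ω') ∂P ∂P :=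
    fun s => indep_integral (m₁ s) hB (hind s) hΨ hb
  simp only [hF]
  refine continuous_of_dominated (bound := fun _ => C) (fun s => ?_) (fun s => ?_)
    (integrable_const _) ?_
  · have : Measurable (fun w : Ω × Ω => Ψ (Y₁ s w.2, B w.1)) := by
      have := m₁ s
      fun_prop
    exact this.stronglyMeasurable.integral_prod_right'.aestronglyMeasurable
  · exact Eventually.of_forall fun ω' => bdd_integral (fun _ => hb _)
  · refine Eventually.of_forall fun ω' => ?_
    generalize B ω' = y
    let φ : ℝ → ℝ := (Ioi (0 : ℝ)).indicator (fun r => ∫ ω, Φ (Y₁ r ω, y) ∂P)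
    have hφ : ∀ t, IntegrableOn φ (Iic t) := by
      intro t
      have h0 := (hint y (max t 0) (le_max_right _ _)).integral_prod_left
      simp only [φ]
      rw [IntegrableOn, integrable_indicator_iff measurableSet_Ioi, IntegrableOn,
        Measure.restrict_restrict measurableSet_Ioi]
      refine IntegrableOn.mono_set h0 ?_
      rintro r ⟨a, b⟩
      exact ⟨a, le_max_of_le_left b⟩
    have hφi : ∀ a b, IntervalIntegrable φ volume a b := by
      intro a b
      rw [intervalIntegrable_iff]
      exact (hφ (max a b)).mono_set (fun x hx => hx.2)
    have hc := (intervalIntegral.continuous_primitive hφi 0).add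
      (continuous_const (y := ∫ ω, Ψ (Y₁ 0 ω, y) ∂P))
    refine hc.congr fun s => ?_
    simp only [Pi.add_apply]
    rcases le_total s 0 with h | h
    · rw [hneg s h, intervalIntegral.integral_symm, intervalIntegral.integral_of_le h]
      have : ∫ x in Ioc s 0, φ x = 0 := by
        refine setIntegral_eq_zero_of_forall_eq_zero fun x hx => ?_
        simp [φ, hx.2]
      rw [this]; simp
    · have e : ∫ x in (0:ℝ)..s, φ x = ∫ p, Φ (Y₁ p.1 p.2, y) ∂((volume.restrict (Ioc 0 s)).prod P) := by
        rw [intervalIntegral.integral_of_le h, integral_prod _ (hint y s h)]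
        refine setIntegral_congr_fun measurableSet_Ioc fun x hx => ?_
        simp [φ, hx.1]
      rw [e, ← hstep y s h]; ring

lemma core_ineq {Ψ Φ₁ Φ₂ : E₁ × E₂ → ℝ} (hΨ : Measurable Ψ) {C : ℝ} (hb : ∀ x, |Ψ x| ≤ C)
    {Y₁ : ℝ → Ω → E₁} {Y₂ : ℝ → Ω → E₂}
    (h₁ : Measurable (fun p : ℝ × Ω => Y₁ p.1 p.2)) (h₂ : Measurable (fun p : ℝ × Ω => Y₂ p.1 p.2))
    (hneg₁ : ∀ s ≤ 0, Y₁ s = Y₁ 0) (hneg₂ : ∀ s ≤ 0, Y₂ s = Y₂ 0)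
    (hind : ∀ s t, IndepFun (Y₁ s) (Y₂ t) P)
    (hint₁ : ∀ y, ∀ t : ℝ, 0 ≤ t →
      Integrable (fun p : ℝ × Ω => Φ₁ (Y₁ p.1 p.2, y)) ((volume.restrict (Ioc 0 t)).prod P))
    (hstep₁ : ∀ y, ∀ t : ℝ, 0 ≤ t → ∫ ω, Ψ (Y₁ t ω, y) ∂P - ∫ ω, Ψ (Y₁ 0 ω, y) ∂P =
      ∫ p, Φ₁ (Y₁ p.1 p.2, y) ∂((volume.restrict (Ioc 0 t)).prod P))
    (hint₂ : ∀ x, ∀ t : ℝ, 0 ≤ t →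
      Integrable (fun p : ℝ × Ω => Φ₂ (x, Y₂ p.1 p.2)) ((volume.restrict (Ioc 0 t)).prod P))
    (hstep₂ : ∀ x, ∀ t : ℝ, 0 ≤ t → ∫ ω, Ψ (x, Y₂ t ω) ∂P - ∫ ω, Ψ (x, Y₂ 0 ω) ∂P =
      ∫ p, Φ₂ (x, Y₂ p.1 p.2) ∂((volume.restrict (Ioc 0 t)).prod P))
    (hI₁ : ∀ S : ℝ, 0 ≤ S → Integrable (fun w : (ℝ × Ω) × (ℝ × Ω) =>
      Φ₁ (Y₁ w.1.1 w.1.2, Y₂ w.2.1 w.2.2))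
      (((volume.restrict (Ioc 0 S)).prod P).prod ((volume.restrict (Ioc 0 S)).prod P)))
    (hI₂ : ∀ S : ℝ, 0 ≤ S → Integrable (fun w : (ℝ × Ω) × (ℝ × Ω) =>
      Φ₂ (Y₁ w.1.1 w.1.2, Y₂ w.2.1 w.2.2))
      (((volume.restrict (Ioc 0 S)).prod P).prod ((volume.restrict (Ioc 0 S)).prod P)))
    (hle : ∀ x y, Φ₁ (x, y) ≤ Φ₂ (x, y)) (T : ℝ) (hT : 0 ≤ T) :
    ∫ ω, Ψ (Y₁ T ω, Y₂ 0 ω) ∂P ≤ ∫ ω, Ψ (Y₁ 0 ω, Y₂ T ω) ∂P := by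
  have m₁ : ∀ t, Measurable (Y₁ t) := fun t => h₁.comp measurable_prodMk_left
  have m₂ : ∀ t, Measurable (Y₂ t) := fun t => h₂.comp measurable_prodMk_left
  have c₁ : Continuous (fun s => ∫ ω, Ψ (Y₁ s ω, Y₂ 0 ω) ∂P) :=
    cont hΨ hb h₁ (m₂ 0) hneg₁ (fun s => hind s 0) hint₁ hstep₁
  have hΨ' : Measurable (fun z : E₂ × E₁ => Ψ z.swap) := hΨ.comp measurable_swap
  have c₂ : Continuous (fun s => ∫ ω, Ψ (Y₁ 0 ω, Y₂ s ω) ∂P) :=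
    cont (Ψ := fun z : E₂ × E₁ => Ψ z.swap) (Φ := fun z : E₂ × E₁ => Φ₂ z.swap)
      hΨ' (fun x => hb _) h₂ (m₁ 0) hneg₂
      (fun s => (hind 0 s).symm) hint₂ hstep₂
  let D : ℝ → ℝ := fun s => ∫ ω, Ψ (Y₁ s ω, Y₂ 0 ω) ∂P - ∫ ω, Ψ (Y₁ 0 ω, Y₂ s ω) ∂P
  have cD : Continuous D := c₁.sub c₂
  let G : ℝ → ℝ := fun u => ∫ s in (0 : ℝ)..u, D s
  have key : ∀ S u : ℝ, 0 ≤ u → u ≤ S → G u =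
      ∫ w, {w : (ℝ × Ω) × (ℝ × Ω) | w.1.1 + w.2.1 ≤ u}.indicator (fun w =>
        Φ₁ (Y₁ w.1.1 w.1.2, Y₂ w.2.1 w.2.2) - Φ₂ (Y₁ w.1.1 w.1.2, Y₂ w.2.1 w.2.2)) w
      ∂(((volume.restrict (Ioc 0 S)).prod P).prod ((volume.restrict (Ioc 0 S)).prod P)) := by
    intro S u hu huS
    have hS := hu.trans huS
    have s₁ := side (Φ := Φ₁) hΨ hb h₁ h₂ hneg₁ hind hstep₁ hu huS
    have s₂ := side (Ψ := fun z : E₂ × E₁ => Ψ z.swap) (Φ := fun z : E₂ × E₁ => Φ₂ z.swap)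
      hΨ' (fun x => hb _) h₂ h₁ hneg₂ (fun s t => (hind t s).symm) hstep₂ hu huS
    simp only [Prod.swap_prod_mk] at s₂
    have hsub : (∫ t in (0 : ℝ)..u, ∫ ω, Ψ (Y₁ t ω, Y₂ (u - t) ω) ∂P) =
        ∫ t in (0 : ℝ)..u, ∫ ω, Ψ (Y₁ (u - t) ω, Y₂ t ω) ∂P := by
      have := intervalIntegral.integral_comp_sub_left (a := 0) (b := u)
        (fun t => ∫ ω, Ψ (Y₁ (u - t) ω, Y₂ t ω) ∂P) u
      simpa using this
    have hms : MeasurableSet {w : (ℝ × Ω) × (ℝ × Ω) | w.1.1 + w.2.1 ≤ u} :=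
      measurableSet_le (by fun_prop) measurable_const
    have hG : G u = (∫ s in (0 : ℝ)..u, ∫ ω, Ψ (Y₁ s ω, Y₂ 0 ω) ∂P) -
        ∫ s in (0 : ℝ)..u, ∫ ω, Ψ (Y₁ 0 ω, Y₂ s ω) ∂P :=
      intervalIntegral.integral_sub (c₁.intervalIntegrable _ _) (c₂.intervalIntegrable _ _)
    have i₁ := (hI₁ S hS).indicator hms
    have i₂ := (hI₂ S hS).indicator hms
    rw [hG]
    simp only [indicator_sub]
    rw [integral_sub i₁ i₂, integral_prod_symm _ i₁, integral_prod _ i₂]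
    have e₁ : ∀ (p q : ℝ × Ω), {w : (ℝ × Ω) × (ℝ × Ω) | w.1.1 + w.2.1 ≤ u}.indicator
        (fun w => Φ₁ (Y₁ w.1.1 w.1.2, Y₂ w.2.1 w.2.2)) (p, q) =
        {p : ℝ × Ω | p.1 ≤ u - q.1}.indicator (fun p => Φ₁ (Y₁ p.1 p.2, Y₂ q.1 q.2)) p := by
      intro p q
      simp only [indicator, mem_ofPred_eq, le_sub_iff_add_le]
    have e₂ : ∀ (p q : ℝ × Ω), {w : (ℝ × Ω) × (ℝ × Ω) | w.1.1 + w.2.1 ≤ u}.indicator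
        (fun w => Φ₂ (Y₁ w.1.1 w.1.2, Y₂ w.2.1 w.2.2)) (p, q) =
        {q : ℝ × Ω | q.1 ≤ u - p.1}.indicator (fun q => Φ₂ (Y₁ p.1 p.2, Y₂ q.1 q.2)) q := by
      intro p q
      simp only [indicator, mem_ofPred_eq, le_sub_iff_add_le']
    simp only [e₁, e₂]
    rw [← s₁, ← s₂, hsub]
    ring
  have anti : AntitoneOn G (Ici T) := by
    intro a ha b hb' hab
    have ha0 : 0 ≤ a := hT.trans ha
    have hb0 : 0 ≤ b := hT.trans hb'
    rw [key b a ha0 hab, key b b hb0 le_rfl]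
    have hms : ∀ u, MeasurableSet {w : (ℝ × Ω) × (ℝ × Ω) | w.1.1 + w.2.1 ≤ u} :=
      fun u => measurableSet_le (by fun_prop) measurable_const
    have hi := (hI₁ b hb0).sub (hI₂ b hb0)
    refine integral_mono (hi.indicator (hms b)) (hi.indicator (hms a)) fun w => ?_
    have h0 := hle (Y₁ w.1.1 w.1.2) (Y₂ w.2.1 w.2.2)
    simp only [indicator, mem_ofPred_eq, Pi.sub_apply]
    split_ifs <;> linarith
  have hd : HasDerivAt G (D T) T :=
    intervalIntegral.integral_hasDerivAt_right (cD.intervalIntegrable _ _)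
      (cD.stronglyMeasurableAtFilter _ _) cD.continuousAt
  have h3 := anti.derivWithin_nonpos (x := T)
  rw [hd.hasDerivWithinAt.derivWithin (uniqueDiffOn_Ici T T self_mem_Ici)] at h3
  simp only [D] at h3
  linarith
end core

lemma mart_int {Ω E : Type*} [MeasurableSpace Ω] {P : Measure Ω} [IsProbabilityMeasure P]
    [MeasurableSpace E] {X : ℝ → Ω → E}
    (hX : Measurable (fun p : ℝ × Ω => X (max p.1 0) p.2)) {φ : E → ℝ} (hφ : Measurable φ)
    (hint : ∀ t : ℝ, 0 ≤ t →
      (∫⁻ s in Icc (0 : ℝ) t, ∫⁻ ω, ENNReal.ofReal |φ (X s ω)| ∂P) < ⊤) (t : ℝ) (ht : 0 ≤ t) :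
    Integrable (fun p : ℝ × Ω => φ (X (max p.1 0) p.2)) ((volume.restrict (Ioc 0 t)).prod P) := by
  have hm : Measurable (fun p : ℝ × Ω => φ (X (max p.1 0) p.2)) := hφ.comp hX
  refine ⟨hm.aestronglyMeasurable, ?_⟩
  rw [hasFiniteIntegral_iff_enorm, lintegral_prod _ hm.enorm.aemeasurable]
  refine lt_of_le_of_lt ?_ (hint t ht)
  refine le_trans (le_of_eq ?_) (lintegral_mono_set Ioc_subset_Icc_self)
  refine setLIntegral_congr_fun measurableSet_Ioc fun s hs => ?_
  simp only [max_eq_left hs.1.le, Real.enorm_eq_ofReal_abs]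

lemma mart_step {Ω E : Type*} [MeasurableSpace Ω] {P : Measure Ω} [IsProbabilityMeasure P]
    [MeasurableSpace E] {X : ℝ → Ω → E}
    {f φ : E → ℝ} (hf : ∀ t : ℝ, 0 ≤ t → Integrable (fun ω => f (X t ω)) P)
    (hint : ∀ t : ℝ, 0 ≤ t →
      Integrable (fun p : ℝ × Ω => φ (X (max p.1 0) p.2)) ((volume.restrict (Ioc 0 t)).prod P))
    {ℱ : Filtration ℝ≥0 (inferInstance : MeasurableSpace Ω)}
    (hM : Martingale (fun (t : ℝ≥0) ω => f (X t ω) - ∫ s in (0 : ℝ)..(t : ℝ), φ (X s ω)) ℱ P)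
    (t : ℝ) (ht : 0 ≤ t) :
    ∫ ω, f (X (max t 0) ω) ∂P - ∫ ω, f (X (max 0 0) ω) ∂P =
      ∫ p, φ (X (max p.1 0) p.2) ∂((volume.restrict (Ioc 0 t)).prod P) := by
  have h := hM.setIntegral_eq (zero_le : (0 : ℝ≥0) ≤ t.toNNReal) MeasurableSet.univ
  have e : ∀ ω, ∫ s in (0 : ℝ)..t, φ (X s ω) = ∫ s in Ioc 0 t, φ (X (max s 0) ω) := by
    intro ω
    rw [intervalIntegral.integral_of_le ht]
    refine setIntegral_congr_fun measurableSet_Ioc fun s hs => ?_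
    simp only [max_eq_left hs.1.le]
  simp only [Measure.restrict_univ, Real.coe_toNNReal t ht, NNReal.coe_zero,
    intervalIntegral.integral_same, sub_zero, e] at h
  rw [integral_sub (hf t ht) (hint t ht).integral_prod_right] at h
  rw [integral_prod_symm _ (hint t ht), max_eq_left ht, max_self, h]
  ring

lemma double_int {Ω E₁ E₂ : Type*} [MeasurableSpace Ω] {P : Measure Ω} [IsProbabilityMeasure P]
    [MeasurableSpace E₁] [MeasurableSpace E₂] {X₁ : ℝ → Ω → E₁} {X₂ : ℝ → Ω → E₂}
    (h₁ : Measurable (fun p : ℝ × Ω => X₁ (max p.1 0) p.2))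
    (h₂ : Measurable (fun p : ℝ × Ω => X₂ (max p.1 0) p.2))
    (hind : ∀ s t, IndepFun (X₁ s) (X₂ t) P)
    {Φ : E₁ × E₂ → ℝ} (hΦ : Measurable Φ)
    (hint : ∀ T : ℝ, 0 ≤ T →
      (∫⁻ s in Icc (0 : ℝ) T, ∫⁻ t in Icc (0 : ℝ) T,
        ∫⁻ ω, ENNReal.ofReal |Φ (X₁ s ω, X₂ t ω)| ∂P) < ⊤) (S : ℝ) (hS : 0 ≤ S) :
    Integrable (fun w : (ℝ × Ω) × (ℝ × Ω) =>
      Φ (X₁ (max w.1.1 0) w.1.2, X₂ (max w.2.1 0) w.2.2))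
      (((volume.restrict (Ioc 0 S)).prod P).prod ((volume.restrict (Ioc 0 S)).prod P)) := by
  have hm : Measurable (fun w : (ℝ × Ω) × (ℝ × Ω) =>
      Φ (X₁ (max w.1.1 0) w.1.2, X₂ (max w.2.1 0) w.2.2)) :=
    hΦ.comp ((h₁.comp measurable_fst).prodMk (h₂.comp measurable_snd))
  have m₁ : ∀ t, Measurable (X₁ (max t 0)) := fun t =>
    h₁.comp (measurable_prodMk_left (x := t))
  have m₂ : ∀ t, Measurable (X₂ (max t 0)) := fun t =>
    h₂.comp (measurable_prodMk_left (x := t))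
  refine ⟨hm.aestronglyMeasurable, ?_⟩
  rw [hasFiniteIntegral_iff_enorm, lintegral_prod _ hm.enorm.aemeasurable,
    lintegral_prod _ hm.enorm.lintegral_prod_right'.aemeasurable]
  refine lt_of_le_of_lt ?_ (hint S hS)
  refine le_trans (le_of_eq ?_) (lintegral_mono_set Ioc_subset_Icc_self)
  refine setLIntegral_congr_fun measurableSet_Ioc fun s hs => ?_
  simp only []
  rw [setLIntegral_congr (s := Icc 0 S) Ioc_ae_eq_Icc.symm]
  have hm2 : ∀ ω, Measurable (fun q : ℝ × Ω => ‖Φ (X₁ (max s 0) ω, X₂ (max q.1 0) q.2)‖ₑ) :=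
    fun ω => hm.enorm.comp (measurable_prodMk_left (x := (s, ω)))
  have e1 : ∀ ω, ∫⁻ q, ‖Φ (X₁ (max s 0) ω, X₂ (max q.1 0) q.2)‖ₑ
      ∂((volume.restrict (Ioc 0 S)).prod P) =
      ∫⁻ t in Ioc 0 S, ∫⁻ ω', ‖Φ (X₁ (max s 0) ω, X₂ (max t 0) ω')‖ₑ ∂P :=
    fun ω => lintegral_prod _ (hm2 ω).aemeasurable
  simp only [e1]
  rw [lintegral_lintegral_swap]
  · refine setLIntegral_congr_fun measurableSet_Ioc fun t ht => ?_
    rw [← indep_lintegral (m₁ s) (m₂ t) (hind _ _) (f := fun z => ‖Φ z‖ₑ) hΦ.enorm]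
    simp only [max_eq_left hs.1.le, max_eq_left ht.1.le, Real.enorm_eq_ofReal_abs]
  · have : Measurable (fun w : (Ω × ℝ) × Ω =>
        ‖Φ (X₁ (max s 0) w.1.1, X₂ (max w.1.2 0) w.2)‖ₑ) :=
      hm.enorm.comp (f := fun w : (Ω × ℝ) × Ω => ((s, w.1.1), (w.1.2, w.2))) (by fun_prop)
    exact this.lintegral_prod_right'.aemeasurable


/-- **Duality with error term** (Athreya–Swart, correction to "Branching-coalescing
particle systems", Corollary, reversed inequalities). -/
theorem everywhere_inequality_le
    {Ω : Type*} [MeasurableSpace Ω] (P : Measure Ω) [IsProbabilityMeasure P]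
    {E₁ E₂ : Type*}
    [TopologicalSpace E₁] [TopologicalSpace.MetrizableSpace E₁]
    [MeasurableSpace E₁] [BorelSpace E₁]
    [TopologicalSpace E₂] [TopologicalSpace.MetrizableSpace E₂]
    [MeasurableSpace E₂] [BorelSpace E₂]
    (Ψ Φ₁ Φ₂ : E₁ × E₂ → ℝ)
    (hΨm : Measurable Ψ) (C : ℝ) (hΨb : ∀ x, |Ψ x| ≤ C)
    (hΦ₁m : Measurable Φ₁) (hΦ₂m : Measurable Φ₂)
    (X₁ : ℝ → Ω → E₁) (X₂ : ℝ → Ω → E₂)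
    (hX₁sm : ∀ t, StronglyMeasurable (X₁ t))
    (hX₂sm : ∀ t, StronglyMeasurable (X₂ t))
    -- càdlàg sample paths on [0,∞)
    (hX₁rc : ∀ ω, ∀ t : ℝ, 0 ≤ t → ContinuousWithinAt (fun s => X₁ s ω) (Ici t) t)
    (hX₁ll : ∀ ω, ∀ t : ℝ, 0 < t →
      ∃ l, Tendsto (fun s => X₁ s ω) (nhdsWithin t (Iio t)) (nhds l))
    (hX₂rc : ∀ ω, ∀ t : ℝ, 0 ≤ t → ContinuousWithinAt (fun s => X₂ s ω) (Ici t) t)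
    (hX₂ll : ∀ ω, ∀ t : ℝ, 0 < t →
      ∃ l, Tendsto (fun s => X₂ s ω) (nhdsWithin t (Iio t)) (nhds l))
    -- X¹ and X² are independent
    (hindep : IndepFun (fun ω t => X₁ t ω) (fun ω t => X₂ t ω) P)
    -- martingale problem for X¹ (with integrability), for every x₂
    (hΨint₁ : ∀ x₂, ∀ t : ℝ, 0 ≤ t → Integrable (fun ω => Ψ (X₁ t ω, x₂)) P)
    (hΦint₁ : ∀ x₂, ∀ t : ℝ, 0 ≤ t →
      (∫⁻ s in Icc (0 : ℝ) t, ∫⁻ ω, ENNReal.ofReal |Φ₁ (X₁ s ω, x₂)| ∂P) < ⊤)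
    (hmart₁ : ∀ x₂, Martingale
      (fun (t : ℝ≥0) ω => Ψ (X₁ t ω, x₂) - ∫ s in (0 : ℝ)..(t : ℝ), Φ₁ (X₁ s ω, x₂))
      (Filtration.natural (fun (t : ℝ≥0) => X₁ t) (fun t => hX₁sm t)) P)
    -- martingale problem for X² (with integrability), for every x₁
    (hΨint₂ : ∀ x₁, ∀ t : ℝ, 0 ≤ t → Integrable (fun ω => Ψ (x₁, X₂ t ω)) P)
    (hΦint₂ : ∀ x₁, ∀ t : ℝ, 0 ≤ t →
      (∫⁻ s in Icc (0 : ℝ) t, ∫⁻ ω, ENNReal.ofReal |Φ₂ (x₁, X₂ s ω)| ∂P) < ⊤)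
    (hmart₂ : ∀ x₁, Martingale
      (fun (t : ℝ≥0) ω => Ψ (x₁, X₂ t ω) - ∫ s in (0 : ℝ)..(t : ℝ), Φ₂ (x₁, X₂ s ω))
      (Filtration.natural (fun (t : ℝ≥0) => X₂ t) (fun t => hX₂sm t)) P)
    -- double integrability assumption (1.7)
    (hΦΦ₁ : ∀ T : ℝ, 0 ≤ T →
      (∫⁻ s in Icc (0 : ℝ) T, ∫⁻ t in Icc (0 : ℝ) T,
        ∫⁻ ω, ENNReal.ofReal |Φ₁ (X₁ s ω, X₂ t ω)| ∂P) < ⊤)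
    (hΦΦ₂ : ∀ T : ℝ, 0 ≤ T →
      (∫⁻ s in Icc (0 : ℝ) T, ∫⁻ t in Icc (0 : ℝ) T,
        ∫⁻ ω, ENNReal.ofReal |Φ₂ (X₁ s ω, X₂ t ω)| ∂P) < ⊤)     (hΦle : ∀ x₁ x₂, Φ₁ (x₁, x₂) ≤ Φ₂ (x₁, x₂)) :
    ∀ T : ℝ, 0 ≤ T →
      (∫ ω, Ψ (X₁ T ω, X₂ 0 ω) ∂P) ≤ ∫ ω, Ψ (X₁ 0 ω, X₂ T ω) ∂P := by
  have h₁ := joint_meas X₁ (fun t => (hX₁sm t).measurable) hX₁rc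
  have h₂ := joint_meas X₂ (fun t => (hX₂sm t).measurable) hX₂rc
  have hind : ∀ s t, IndepFun (X₁ s) (X₂ t) P := fun s t =>
    hindep.comp (measurable_pi_apply s) (measurable_pi_apply t)
  have mΦ₁ : ∀ y, Measurable (fun x => Φ₁ (x, y)) := fun y => hΦ₁m.comp measurable_prodMk_right
  have mΦ₂ : ∀ x, Measurable (fun y => Φ₂ (x, y)) := fun x => hΦ₂m.comp measurable_prodMk_left
  have i₁ := fun y => mart_int (P := P) h₁ (mΦ₁ y) (hΦint₁ y)
  have i₂ := fun x => mart_int (P := P) h₂ (mΦ₂ x) (hΦint₂ x)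
  intro T hT
  have := core_ineq (P := P) (Φ₁ := Φ₁) (Φ₂ := Φ₂) hΨm hΨb
    (Y₁ := fun t => X₁ (max t 0)) (Y₂ := fun t => X₂ (max t 0)) h₁ h₂
    (fun s hs => by simp [hs]) (fun s hs => by simp [hs])
    (fun s t => hind _ _) i₁
    (fun y => mart_step (f := fun x => Ψ (x, y)) (φ := fun x => Φ₁ (x, y))
      (hΨint₁ y) (i₁ y) (hmart₁ y)) i₂
    (fun x => mart_step (f := fun y => Ψ (x, y)) (φ := fun y => Φ₂ (x, y))
      (hΨint₂ x) (i₂ x) (hmart₂ x))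
    (double_int h₁ h₂ hind hΦ₁m hΦΦ₁) (double_int h₁ h₂ hind hΦ₂m hΦΦ₂) hΦle T hT
  simpa [hT] using this
end

section
/- For every r > 0 and every t ≥ 0, e^{−r e^t} + r ∫₀ᵗ 1_{\{r e^s ≠ e\}} e^s e^{−r e^s} ds = e^{−r}. In other words, the deterministic process X_t := e^t on E = (0,∞) makes the process t ↦ f_r(X_t) − ∫₀ᵗ A₁ f_r(X_s) ds constant (hence a martingale), where f_r(x) := e^{−r x} and A₁ f_r(x) := −1_{\{r x ≠ e\}} r x e^{−r x}. -/
open MeasureTheory Set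

/-- Verification in the counterexample of the correction note: the deterministic
process `X_t = e^t` makes `t ↦ f_r(X_t) − ∫₀ᵗ A₁ f_r(X_s) ds` constantly equal to
`f_r(X_0) = e^{−r}`, where `f_r(x) = e^{−rx}` and
`A₁ f_r(x) = −1_{{rx ≠ e}} r x e^{−rx}`. -/
theorem counterexample_martingale_problem_verification :
    ∀ r : ℝ, 0 < r → ∀ t : ℝ, 0 ≤ t →
      Real.exp (-(r * Real.exp t))
        + r * ∫ s in (0 : ℝ)..t,
            (if r * Real.exp s ≠ Real.exp 1 then (1 : ℝ) else 0)
              * Real.exp s * Real.exp (-(r * Real.exp s))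
        = Real.exp (-r) := by
  intro r hr t _
  have hae : ∀ᵐ s : ℝ, s ≠ 1 - Real.log r := by
    simp [ae_iff]
  have h1 : (∫ s in (0 : ℝ)..t,
            (if r * Real.exp s ≠ Real.exp 1 then (1 : ℝ) else 0)
              * Real.exp s * Real.exp (-(r * Real.exp s)))
      = ∫ s in (0 : ℝ)..t, Real.exp s * Real.exp (-(r * Real.exp s)) := by
    apply intervalIntegral.integral_congr_ae
    filter_upwards [hae] with s hs _
    have hne : r * Real.exp s ≠ Real.exp 1 := by
      intro h
      apply hs
      have h2 := congrArg Real.log h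
      rw [Real.log_mul hr.ne' (Real.exp_pos s).ne', Real.log_exp, Real.log_exp] at h2
      linarith
    rw [if_pos hne, one_mul]
  have h3 : (∫ s in (0 : ℝ)..t, -(r * (Real.exp s * Real.exp (-(r * Real.exp s)))))
      = Real.exp (-(r * Real.exp t)) - Real.exp (-(r * Real.exp 0)) := by
    apply intervalIntegral.integral_eq_sub_of_hasDerivAt
      (f := fun s => Real.exp (-(r * Real.exp s)))
    · intro s _
      have h4 : HasDerivAt (fun s => -(r * Real.exp s)) (-(r * Real.exp s)) s :=
        ((Real.hasDerivAt_exp s).const_mul r).neg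
      have h5 := h4.exp
      have h6 : -(r * (Real.exp s * Real.exp (-(r * Real.exp s))))
          = Real.exp (-(r * Real.exp s)) * -(r * Real.exp s) := by ring
      rw [h6]
      exact h5
    · apply Continuous.intervalIntegrable
      fun_prop
  rw [intervalIntegral.integral_neg, intervalIntegral.integral_const_mul, Real.exp_zero,
    mul_one] at h3
  rw [h1]
  linarith
end

section
/- Define R : (0,∞) × (0,∞) → ℝ by R(x₁, x₂) := 1_{\{x₁ x₂ = e\}} x₁ x₂ e^{−x₁ x₂}. Then for every T ≥ 0, ∫₀ᵀ R(e^t, e^{T−t}) dt = 1_{\{T = 1\}} e^{1−e}. In particular, taking Ψ(x₁,x₂) := e^{−x₁x₂} and the deterministic processes X¹_t = X²_t = e^t, the left-hand side Ψ(X¹_T, X²_0) − Ψ(X¹_0, X²_T) = e^{−e^T} − e^{−e^T} = 0 for all T ≥ 0, while the right-hand side ∫₀ᵀ R(X¹_t, X²_{T−t}) dt equals e^{1−e} ≠ 0 at T = 1; hence the duality identity 'LHS = RHS' holds for Lebesgue-almost every T but fails at T = 1. -/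
open MeasureTheory Set

/-- The error term of the counterexample:
`R(x₁,x₂) = 1_{{x₁x₂ = e}} x₁ x₂ e^{−x₁x₂}`. -/
noncomputable def counterexampleR (x₁ x₂ : ℝ) : ℝ :=
  if x₁ * x₂ = Real.exp 1 then x₁ * x₂ * Real.exp (-(x₁ * x₂)) else 0

/-- The duality function of the counterexample: `Ψ(x₁,x₂) = e^{−x₁x₂}`. -/
noncomputable def counterexamplePsi (x₁ x₂ : ℝ) : ℝ := Real.exp (-(x₁ * x₂))

/-- Counterexample of the correction note: with `X¹_t = X²_t = e^t`,
`∫₀ᵀ R(e^t, e^{T−t}) dt = 1_{{T=1}} e^{1−e}`, the duality left-hand side vanishes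
identically, the duality identity holds for Lebesgue-a.e. `T ≥ 0`, but fails at
`T = 1`. -/
theorem counterexample_duality_fails_at_one :
    (∀ T : ℝ, 0 ≤ T →
      ∫ t in (0 : ℝ)..T, counterexampleR (Real.exp t) (Real.exp (T - t))
        = if T = 1 then Real.exp (1 - Real.exp 1) else 0)
    ∧ (∀ T : ℝ, 0 ≤ T →
        counterexamplePsi (Real.exp T) (Real.exp 0)
          - counterexamplePsi (Real.exp 0) (Real.exp T) = 0)
    ∧ (∀ᵐ T ∂(volume.restrict (Ici (0 : ℝ))),
        counterexamplePsi (Real.exp T) (Real.exp 0)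
            - counterexamplePsi (Real.exp 0) (Real.exp T)
          = ∫ t in (0 : ℝ)..T, counterexampleR (Real.exp t) (Real.exp (T - t)))
    ∧ ¬ (counterexamplePsi (Real.exp 1) (Real.exp 0)
            - counterexamplePsi (Real.exp 0) (Real.exp 1)
          = ∫ t in (0 : ℝ)..(1 : ℝ),
              counterexampleR (Real.exp t) (Real.exp (1 - t))) := by
  have key : ∀ T : ℝ, ∫ t in (0 : ℝ)..T, counterexampleR (Real.exp t) (Real.exp (T - t))
        = if T = 1 then Real.exp (1 - Real.exp 1) else 0 := by
    intro T
    have h : ∀ t : ℝ, counterexampleR (Real.exp t) (Real.exp (T - t))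
        = if T = 1 then Real.exp (1 - Real.exp 1) else 0 := by
      intro t
      have h1 : Real.exp t * Real.exp (T - t) = Real.exp T := by
        rw [← Real.exp_add]; congr 1; ring
      unfold counterexampleR
      rw [h1]
      simp only [Real.exp_eq_exp]
      split_ifs with hT
      · subst hT
        rw [← Real.exp_add, sub_eq_add_neg]
      · rfl
    simp only [h]
    rw [intervalIntegral.integral_const]
    split_ifs with hT
    · subst hT; simp
    · simp
  have psi : ∀ T : ℝ, counterexamplePsi (Real.exp T) (Real.exp 0)
          - counterexamplePsi (Real.exp 0) (Real.exp T) = 0 := by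
    intro T
    simp [counterexamplePsi]
  refine ⟨fun T _ => key T, fun T _ => psi T, ?_, ?_⟩
  · apply ae_restrict_of_ae
    have h : ∀ᵐ T : ℝ, T ≠ 1 := by
      simp [ae_iff]
    filter_upwards [h] with T hT
    rw [psi, key, if_neg hT]
  · rw [psi, key, if_pos rfl]
    exact (Real.exp_pos _).ne
end
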